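/- arXiv:1610.00166 — 8 statements merged into one kernel-verified Lean document; each statement's English description precedes it below -/
import Mathlib

section
/- With F, u, J₁, J₂, J, B = ℍ[F; u, J], V = B × B, the form ⟨·,·⟩ and the maps I₁, K₁, I₂, K₂ as in the context: (a) for all x, y ∈ V and b, c ∈ B one has ⟨x·b, y·c⟩ = star(b)·⟨x,y⟩·c and ⟨y,x⟩ = −star(⟨x,y⟩) (i.e. ⟨·,·⟩ is a B-skew-hermitian form on the right B-module V); (b) each of I₁, K₁, I₂, K₂ is an endomorphism of V as a right B-module; (c) I₁∘I₁ = u·id, K₁∘K₁ = J₁·id, I₁∘K₁ = −K₁∘I₁, and I₂∘I₂ = u·id, K₂∘K₂ = J₂·id, I₂∘K₂ = −K₂∘I₂ (so I₁, K₁ generate an action of the quaternion algebra ℍ[F; u, J₁] on V, and I₂, K₂ an action of ℍ[F; u, J₂]); (d) each of I₁, K₁ commutes with each of I₂, K₂, so these two quaternion algebra actions commute. -/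
/-!
A right `B`-linear endomorphism of `V = B × B` is left multiplication by a `2 × 2` matrix over `B`.
Here `I₁ = diag(i, -i)` and `I₂ = diag(i, i)`, while `K₁` and `K₂` are antidiagonal with entries
`J₁, 1` and `j, J₁⁻¹ j`. All relations between these matrices follow from `i² = u`, `j² = J₁J₂`
and `ji = -ij`: for instance `K₂² = J₁⁻¹ j² = J₂`, and `I₁` commutes with `K₂` because the sign of
`ji = -ij` cancels the sign in `I₁`. The form is skew-hermitian because `star i = -i`.
-/

open scoped Quaternion

noncomputable section

namespace QuaternionSkewHermitianModel

variable (F : Type*) [Field F]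

/-- The element `i` of the quaternion algebra `ℍ[F, u, J]`. -/
def qi (u J : F) : ℍ[F, u, J] := ⟨0, 1, 0, 0⟩

/-- The element `j` of the quaternion algebra `ℍ[F, u, J]`. -/
def qj (u J : F) : ℍ[F, u, J] := ⟨0, 0, 1, 0⟩

variable (u J₁ J₂ : F)

/-- `V = B × B` with `B = ℍ[F, u, J₁J₂]`, the explicit model of the skew-hermitian
`B`-space `B₁ ⊗_E B₂`. -/
abbrev V := ℍ[F, u, J₁ * J₂] × ℍ[F, u, J₁ * J₂]

/-- The `B`-valued form `⟨(x₁,x₂),(y₁,y₂)⟩ = star x₁ · i · y₁ − J₁ (star x₂ · i · y₂)`. -/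
def bform (x y : V F u J₁ J₂) : ℍ[F, u, J₁ * J₂] :=
  star x.1 * qi F u (J₁ * J₂) * y.1 - J₁ • (star x.2 * qi F u (J₁ * J₂) * y.2)

/-- The operator `I₁ (x₁, x₂) = (i x₁, −(i x₂))`. -/
def I₁ (x : V F u J₁ J₂) : V F u J₁ J₂ :=
  (qi F u (J₁ * J₂) * x.1, -(qi F u (J₁ * J₂) * x.2))

/-- The operator `K₁ (x₁, x₂) = (J₁ x₂, x₁)`. -/
def K₁ (x : V F u J₁ J₂) : V F u J₁ J₂ := (J₁ • x.2, x.1)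

/-- The operator `I₂ (x₁, x₂) = (i x₁, i x₂)`. -/
def I₂ (x : V F u J₁ J₂) : V F u J₁ J₂ :=
  (qi F u (J₁ * J₂) * x.1, qi F u (J₁ * J₂) * x.2)

/-- The operator `K₂ (x₁, x₂) = (j x₂, J₁⁻¹ (j x₁))`. -/
def K₂ (x : V F u J₁ J₂) : V F u J₁ J₂ :=
  (qj F u (J₁ * J₂) * x.2, J₁⁻¹ • (qj F u (J₁ * J₂) * x.1))

section

open MulOpposite

variable {F u J₁ J₂}

theorem qi_mul_qi (u J : F) : qi F u J * qi F u J = u • 1 := by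
  let q := QuaternionAlgebra.Basis.self F (c₁ := u) (c₂ := 0) (c₃ := J)
  change q.i * q.i = u • 1
  rw [q.i_mul_i, zero_smul, add_zero]

theorem qj_mul_qj (u J : F) : qj F u J * qj F u J = J • 1 :=
  (QuaternionAlgebra.Basis.self F).j_mul_j

theorem qj_mul_qi (u J : F) : qj F u J * qi F u J = -(qi F u J * qj F u J) := by
  let q := QuaternionAlgebra.Basis.self F (c₁ := u) (c₂ := 0) (c₃ := J)
  change q.j * q.i = -(q.i * q.j)
  rw [q.j_mul_i, q.i_mul_j, zero_smul, zero_sub]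

theorem star_qi (u J : F) : star (qi F u J) = -qi F u J := by
  ext <;> simp [qi]

theorem qi_mul_qi_mul {J : F} (a : ℍ[F,u,J]) : qi F u J * (qi F u J * a) = u • a := by
  rw [← mul_assoc, qi_mul_qi, smul_one_mul]

theorem qj_mul_qj_mul {J : F} (a : ℍ[F,u,J]) : qj F u J * (qj F u J * a) = J • a := by
  rw [← mul_assoc, qj_mul_qj, smul_one_mul]

theorem qj_mul_qi_mul {J : F} (a : ℍ[F,u,J]) :
    qj F u J * (qi F u J * a) = -(qi F u J * (qj F u J * a)) := by
  rw [← mul_assoc, qj_mul_qi, neg_mul, mul_assoc]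

theorem star_star_mul_mul_of_mem_skewAdjoint {R : Type*} [Ring R] [StarRing R] {a : R}
    (ha : a ∈ skewAdjoint R) (x y : R) : star (star x * a * y) = -(star y * a * x) := by
  rw [star_mul, star_mul, star_star, skewAdjoint.mem_iff.mp ha, neg_mul, mul_neg, mul_assoc]

theorem bform_op_smul_op_smul (x y : V F u J₁ J₂) (b c : ℍ[F,u,J₁ * J₂]) :
    bform F u J₁ J₂ (op b • x) (op c • y) = star b * bform F u J₁ J₂ x y * c := by
  simp only [bform, Prod.smul_fst, Prod.smul_snd, op_smul_eq_mul, star_mul, mul_sub, sub_mul,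
    mul_smul_comm, smul_mul_assoc, mul_assoc]

theorem bform_swap (x y : V F u J₁ J₂) : bform F u J₁ J₂ y x = -star (bform F u J₁ J₂ x y) := by
  have hi : qi F u (J₁ * J₂) ∈ skewAdjoint ℍ[F,u,J₁ * J₂] := star_qi u (J₁ * J₂)
  simp only [bform, star_sub, QuaternionAlgebra.star_smul',
    star_star_mul_mul_of_mem_skewAdjoint hi, smul_neg, neg_sub_neg, neg_sub]

theorem isLinearMap_I₁ : IsLinearMap ℍ[F,u,J₁ * J₂]ᵐᵒᵖ (I₁ F u J₁ J₂) where
  map_add x y := by simp only [I₁, Prod.fst_add, Prod.snd_add, mul_add, neg_add, Prod.mk_add_mk]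
  map_smul b x := by simp only [I₁, Prod.smul_fst, Prod.smul_snd, mul_smul_comm, Prod.smul_mk,
    smul_neg]

theorem isLinearMap_K₁ : IsLinearMap ℍ[F,u,J₁ * J₂]ᵐᵒᵖ (K₁ F u J₁ J₂) where
  map_add x y := by simp only [K₁, Prod.fst_add, Prod.snd_add, smul_add, Prod.mk_add_mk]
  map_smul b x := by simp only [K₁, Prod.smul_fst, Prod.smul_snd, smul_comm J₁ b, Prod.smul_mk]

theorem isLinearMap_I₂ : IsLinearMap ℍ[F,u,J₁ * J₂]ᵐᵒᵖ (I₂ F u J₁ J₂) where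
  map_add x y := by simp only [I₂, Prod.fst_add, Prod.snd_add, mul_add, Prod.mk_add_mk]
  map_smul b x := by simp only [I₂, Prod.smul_fst, Prod.smul_snd, mul_smul_comm, Prod.smul_mk]

theorem isLinearMap_K₂ : IsLinearMap ℍ[F,u,J₁ * J₂]ᵐᵒᵖ (K₂ F u J₁ J₂) where
  map_add x y := by
    simp only [K₂, Prod.fst_add, Prod.snd_add, mul_add, smul_add, Prod.mk_add_mk]
  map_smul b x := by
    simp only [K₂, Prod.smul_fst, Prod.smul_snd, mul_smul_comm, smul_comm J₁⁻¹ b, Prod.smul_mk]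

theorem I₁_I₁ (x : V F u J₁ J₂) : I₁ F u J₁ J₂ (I₁ F u J₁ J₂ x) = u • x := by
  simp only [I₁, mul_neg, neg_neg, qi_mul_qi_mul, Prod.smul_def]

theorem K₁_K₁ (x : V F u J₁ J₂) : K₁ F u J₁ J₂ (K₁ F u J₁ J₂ x) = J₁ • x := rfl

theorem I₁_K₁ (x : V F u J₁ J₂) :
    I₁ F u J₁ J₂ (K₁ F u J₁ J₂ x) = -K₁ F u J₁ J₂ (I₁ F u J₁ J₂ x) := by
  simp only [I₁, K₁, mul_smul_comm, smul_neg, Prod.neg_mk, neg_neg]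

theorem I₂_I₂ (x : V F u J₁ J₂) : I₂ F u J₁ J₂ (I₂ F u J₁ J₂ x) = u • x := by
  simp only [I₂, qi_mul_qi_mul, Prod.smul_def]

theorem K₂_K₂ (hJ₁ : J₁ ≠ 0) (x : V F u J₁ J₂) :
    K₂ F u J₁ J₂ (K₂ F u J₁ J₂ x) = J₂ • x := by
  simp only [K₂, mul_smul_comm, qj_mul_qj_mul, smul_smul, inv_mul_cancel_left₀ hJ₁, Prod.smul_def]

theorem I₂_K₂ (x : V F u J₁ J₂) :
    I₂ F u J₁ J₂ (K₂ F u J₁ J₂ x) = -K₂ F u J₁ J₂ (I₂ F u J₁ J₂ x) := by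
  simp only [I₂, K₂, mul_smul_comm, qj_mul_qi_mul, smul_neg, Prod.neg_mk, neg_neg]

theorem I₁_I₂ (x : V F u J₁ J₂) :
    I₁ F u J₁ J₂ (I₂ F u J₁ J₂ x) = I₂ F u J₁ J₂ (I₁ F u J₁ J₂ x) := by
  simp only [I₁, I₂, mul_neg]

theorem I₁_K₂ (x : V F u J₁ J₂) :
    I₁ F u J₁ J₂ (K₂ F u J₁ J₂ x) = K₂ F u J₁ J₂ (I₁ F u J₁ J₂ x) := by
  simp only [I₁, K₂, mul_smul_comm, mul_neg, qj_mul_qi_mul, smul_neg, neg_neg]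

theorem K₁_I₂ (x : V F u J₁ J₂) :
    K₁ F u J₁ J₂ (I₂ F u J₁ J₂ x) = I₂ F u J₁ J₂ (K₁ F u J₁ J₂ x) := by
  simp only [K₁, I₂, mul_smul_comm]

theorem K₁_K₂ (hJ₁ : J₁ ≠ 0) (x : V F u J₁ J₂) :
    K₁ F u J₁ J₂ (K₂ F u J₁ J₂ x) = K₂ F u J₁ J₂ (K₁ F u J₁ J₂ x) := by
  simp only [K₁, K₂, mul_smul_comm, smul_inv_smul₀ hJ₁, inv_smul_smul₀ hJ₁]

end

/-- (a) `bform` is a `B`-skew-hermitian form on the right `B`-module `V`;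
(b) `I₁, K₁, I₂, K₂` are right `B`-module endomorphisms of `V`; (c) `I₁, K₁` generate an
action of `ℍ[F, u, J₁]` and `I₂, K₂` an action of `ℍ[F, u, J₂]`; (d) the two actions
commute. -/
theorem statement_4 (hu : u ≠ 0) (hJ₁ : J₁ ≠ 0) (hJ₂ : J₂ ≠ 0) :
    -- (a) skew-hermitian
    (∀ (x y : V F u J₁ J₂) (b c : ℍ[F, u, J₁ * J₂]),
        bform F u J₁ J₂ (x.1 * b, x.2 * b) (y.1 * c, y.2 * c)
          = star b * bform F u J₁ J₂ x y * c) ∧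
    (∀ x y : V F u J₁ J₂, bform F u J₁ J₂ y x = -star (bform F u J₁ J₂ x y)) ∧
    -- (b) right `B`-module endomorphisms
    (∀ x y : V F u J₁ J₂, I₁ F u J₁ J₂ (x + y) = I₁ F u J₁ J₂ x + I₁ F u J₁ J₂ y) ∧
    (∀ (x : V F u J₁ J₂) (b : ℍ[F, u, J₁ * J₂]),
        I₁ F u J₁ J₂ (x.1 * b, x.2 * b) = ((I₁ F u J₁ J₂ x).1 * b, (I₁ F u J₁ J₂ x).2 * b)) ∧
    (∀ x y : V F u J₁ J₂, K₁ F u J₁ J₂ (x + y) = K₁ F u J₁ J₂ x + K₁ F u J₁ J₂ y) ∧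
    (∀ (x : V F u J₁ J₂) (b : ℍ[F, u, J₁ * J₂]),
        K₁ F u J₁ J₂ (x.1 * b, x.2 * b) = ((K₁ F u J₁ J₂ x).1 * b, (K₁ F u J₁ J₂ x).2 * b)) ∧
    (∀ x y : V F u J₁ J₂, I₂ F u J₁ J₂ (x + y) = I₂ F u J₁ J₂ x + I₂ F u J₁ J₂ y) ∧
    (∀ (x : V F u J₁ J₂) (b : ℍ[F, u, J₁ * J₂]),
        I₂ F u J₁ J₂ (x.1 * b, x.2 * b) = ((I₂ F u J₁ J₂ x).1 * b, (I₂ F u J₁ J₂ x).2 * b)) ∧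
    (∀ x y : V F u J₁ J₂, K₂ F u J₁ J₂ (x + y) = K₂ F u J₁ J₂ x + K₂ F u J₁ J₂ y) ∧
    (∀ (x : V F u J₁ J₂) (b : ℍ[F, u, J₁ * J₂]),
        K₂ F u J₁ J₂ (x.1 * b, x.2 * b) = ((K₂ F u J₁ J₂ x).1 * b, (K₂ F u J₁ J₂ x).2 * b)) ∧
    -- (c) quaternion relations
    (∀ x : V F u J₁ J₂, I₁ F u J₁ J₂ (I₁ F u J₁ J₂ x) = u • x) ∧
    (∀ x : V F u J₁ J₂, K₁ F u J₁ J₂ (K₁ F u J₁ J₂ x) = J₁ • x) ∧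
    (∀ x : V F u J₁ J₂, I₁ F u J₁ J₂ (K₁ F u J₁ J₂ x) = -K₁ F u J₁ J₂ (I₁ F u J₁ J₂ x)) ∧
    (∀ x : V F u J₁ J₂, I₂ F u J₁ J₂ (I₂ F u J₁ J₂ x) = u • x) ∧
    (∀ x : V F u J₁ J₂, K₂ F u J₁ J₂ (K₂ F u J₁ J₂ x) = J₂ • x) ∧
    (∀ x : V F u J₁ J₂, I₂ F u J₁ J₂ (K₂ F u J₁ J₂ x) = -K₂ F u J₁ J₂ (I₂ F u J₁ J₂ x)) ∧
    -- (d) the two actions commute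
    (∀ x : V F u J₁ J₂, I₁ F u J₁ J₂ (I₂ F u J₁ J₂ x) = I₂ F u J₁ J₂ (I₁ F u J₁ J₂ x)) ∧
    (∀ x : V F u J₁ J₂, I₁ F u J₁ J₂ (K₂ F u J₁ J₂ x) = K₂ F u J₁ J₂ (I₁ F u J₁ J₂ x)) ∧
    (∀ x : V F u J₁ J₂, K₁ F u J₁ J₂ (I₂ F u J₁ J₂ x) = I₂ F u J₁ J₂ (K₁ F u J₁ J₂ x)) ∧
    (∀ x : V F u J₁ J₂, K₁ F u J₁ J₂ (K₂ F u J₁ J₂ x) = K₂ F u J₁ J₂ (K₁ F u J₁ J₂ x)) := by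
  exact ⟨bform_op_smul_op_smul, bform_swap,
    isLinearMap_I₁.map_add, fun x b ↦ isLinearMap_I₁.map_smul (.op b) x,
    isLinearMap_K₁.map_add, fun x b ↦ isLinearMap_K₁.map_smul (.op b) x,
    isLinearMap_I₂.map_add, fun x b ↦ isLinearMap_I₂.map_smul (.op b) x,
    isLinearMap_K₂.map_add, fun x b ↦ isLinearMap_K₂.map_smul (.op b) x,
    I₁_I₁, K₁_K₁, I₁_K₁, I₂_I₂, K₂_K₂ hJ₁, I₂_K₂,
    I₁_I₂, I₁_K₂, K₁_I₂, K₁_K₂ hJ₁⟩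

end QuaternionSkewHermitianModel
end
end

section
/- Let k be a non-negative integer and v a positive real number. Then for all real numbers x and y, ∫_ℝ (x + (i/v)·w)^k · exp(−(π/2)·(v·x² + w²/v)) · exp(2πi·w·y) dw = (2^{k−1} · π^k · v^{k−1})^{−1/2} · H_k(√(2πv)·(x/2 − y)) · exp(−πv·(x²/2 + 2y²)), where the integral is a complex-valued Lebesgue integral over w ∈ ℝ. -/
open MeasureTheory

/-- The physicists' Hermite polynomial, via its characterization
`H_k t = (−1)^k · e^{t²} · (d^k/dt^k)(e^{−t²})`. -/
noncomputable def physHermite (k : ℕ) (t : ℝ) : ℝ :=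
  (-1 : ℝ) ^ k * Real.exp (t ^ 2) * iteratedDeriv k (fun s : ℝ => Real.exp (-s ^ 2)) t

/-!
Put `r = √(2πv)` and `u = x + (i/v) w`. Since `2πi w y = 2πv y (u - x)`, the substitution
`w ↦ (r/v) w` turns the integral into a multiple of `𝔼[X ^ k exp (τX)]`, where `X = r u` is now
`r x + i W` with `W` a centred Gaussian variable of variance `2`, and `τ = r y`. This expectation
is the `k`-th derivative in `τ` of `𝔼[exp (τX)] = exp (2τz - τ²)`, `z = r x / 2`, which is the
exponential generating function of the Hermite polynomials at `z`; its `k`-th derivative is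
`H_k (z - τ) exp (2τz - τ²)`.
-/

open ProbabilityTheory

section ExponentialMoments

variable {Ω : Type*} {mΩ : MeasurableSpace Ω} {μ : Measure Ω}

lemma norm_cexp_ofReal_mul_le_add {l t u : ℝ} (ht : t ∈ Set.Icc l u) (z : ℂ) :
    ‖Complex.exp (t * z)‖ ≤ ‖Complex.exp (l * z)‖ + ‖Complex.exp (u * z)‖ := by
  simp only [Complex.norm_exp, Complex.re_ofReal_mul]
  rcases le_total 0 z.re with hz | hz
  · exact le_add_of_nonneg_of_le (Real.exp_nonneg _)
      (Real.exp_le_exp.2 (mul_le_mul_of_nonneg_right ht.2 hz))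
  · exact le_add_of_le_of_nonneg
      (Real.exp_le_exp.2 (mul_le_mul_of_nonpos_right ht.1 hz)) (Real.exp_nonneg _)

lemma hasDerivAt_integral_pow_mul_cexp {X : Ω → ℂ}
    (hX : ∀ (n : ℕ) (t : ℝ), Integrable (fun ω ↦ X ω ^ n * Complex.exp (t * X ω)) μ)
    (n : ℕ) (t : ℝ) :
    HasDerivAt (fun t : ℝ ↦ ∫ ω, X ω ^ n * Complex.exp (t * X ω) ∂μ)
      (∫ ω, X ω ^ (n + 1) * Complex.exp (t * X ω) ∂μ) t := by
  refine (hasDerivAt_integral_of_dominated_loc_of_deriv_le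
    (F := fun (t : ℝ) ω ↦ X ω ^ n * Complex.exp (t * X ω))
    (F' := fun (t : ℝ) ω ↦ X ω ^ (n + 1) * Complex.exp (t * X ω))
    (bound := fun ω ↦ ‖X ω ^ (n + 1) * Complex.exp ((t - 1 : ℝ) * X ω)‖ +
      ‖X ω ^ (n + 1) * Complex.exp ((t + 1 : ℝ) * X ω)‖)
    (Icc_mem_nhds (sub_one_lt t) (lt_add_one t))
    (.of_forall fun s ↦ (hX n s).aestronglyMeasurable) (hX n t)
    (hX (n + 1) t).aestronglyMeasurable (.of_forall fun ω s hs ↦ ?_)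
    ((hX (n + 1) (t - 1)).norm.add (hX (n + 1) (t + 1)).norm)
    (.of_forall fun ω s _ ↦ ?_)).2
  · simp only [norm_mul, ← mul_add]
    gcongr
    exact norm_cexp_ofReal_mul_le_add hs _
  · have hlin : HasDerivAt (fun s : ℝ ↦ (s : ℂ) * X ω) (X ω) s := by
      simpa using (Complex.ofRealCLM.hasDerivAt (x := s)).mul_const (X ω)
    convert! hlin.cexp.const_mul (X ω ^ n) using 1
    ring

lemma iteratedDeriv_integral_cexp {X : Ω → ℂ}
    (hX : ∀ (n : ℕ) (t : ℝ), Integrable (fun ω ↦ X ω ^ n * Complex.exp (t * X ω)) μ) (n : ℕ) :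
    iteratedDeriv n (fun t : ℝ ↦ ∫ ω, Complex.exp (t * X ω) ∂μ) =
      fun t : ℝ ↦ ∫ ω, X ω ^ n * Complex.exp (t * X ω) ∂μ := by
  induction n with
  | zero => simp
  | succ n ih =>
    ext t
    rw [iteratedDeriv_succ, ih]
    exact (hasDerivAt_integral_pow_mul_cexp hX n t).deriv

lemma integrable_add_mul_pow_mul_cexp {Y : Ω → ℝ} {z : ℂ}
    (hz : z.re ∈ interior (integrableExpSet Y μ)) (a b : ℂ) (n : ℕ) :
    Integrable (fun ω ↦ (a + b * Y ω) ^ n * Complex.exp (z * Y ω)) μ := by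
  simp only [add_comm a, add_pow, mul_pow, Finset.sum_mul]
  refine integrable_finsetSum _ fun j _ ↦ ?_
  refine ((integrable_pow_mul_cexp_of_re_mem_interior_integrableExpSet hz j).const_mul
    (b ^ j * a ^ (n - j) * n.choose j)).congr (.of_forall fun ω ↦ ?_)
  ring

end ExponentialMoments

section GaussianMoments

variable (a b : ℂ) (m : ℝ) (s : NNReal)

lemma integral_cexp_affine_gaussianReal (t : ℝ) :
    ∫ w, Complex.exp (t * (a + b * w)) ∂gaussianReal m s =
      Complex.exp (t * (a + b * m) + s * (t * b) ^ 2 / 2) := by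
  have hmgf : ∫ w : ℝ, Complex.exp (t * b * w) ∂gaussianReal m s =
      Complex.exp (t * b * m + s * (t * b) ^ 2 / 2) := complexMGF_id_gaussianReal (t * b)
  simp only [mul_add, Complex.exp_add, ← mul_assoc, integral_const_mul] at hmgf ⊢
  rw [hmgf]
  ring

lemma integral_affine_pow_mul_cexp_gaussianReal (n : ℕ) (t : ℝ) :
    ∫ w, (a + b * w) ^ n * Complex.exp (t * (a + b * w)) ∂gaussianReal m s =
      iteratedDeriv n (fun t : ℝ ↦ Complex.exp (t * (a + b * m) + s * (t * b) ^ 2 / 2)) t := by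
  have hintegrable (n : ℕ) (t : ℝ) :
      Integrable (fun w : ℝ ↦ (a + b * w) ^ n * Complex.exp (t * (a + b * w)))
        (gaussianReal m s) := by
    refine ((integrable_add_mul_pow_mul_cexp (Y := id) (z := t * b) (by simp) a b n).const_mul
      (Complex.exp (t * a))).congr (.of_forall fun w ↦ ?_)
    simp only [id_eq, mul_add, Complex.exp_add]
    ring_nf
  simp only [← integral_cexp_affine_gaussianReal]
  exact (congrFun (iteratedDeriv_integral_cexp hintegrable n) t).symm

end GaussianMoments

lemma iteratedDeriv_ofReal_comp {n : ℕ} {f : ℝ → ℝ} {t : ℝ} (hf : ContDiffAt ℝ n f t) :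
    iteratedDeriv n (fun s ↦ (f s : ℂ)) t = (iteratedDeriv n f t : ℝ) := by
  simp only [iteratedDeriv_eq_iteratedFDeriv]
  exact congrArg (· fun _ ↦ 1) (Complex.ofRealCLM.iteratedFDeriv_comp_left hf le_rfl)

lemma iteratedDeriv_exp_two_mul_sub_sq (k : ℕ) (z t : ℝ) :
    iteratedDeriv k (fun t ↦ Real.exp (2 * t * z - t ^ 2)) t =
      physHermite k (z - t) * Real.exp (2 * t * z - t ^ 2) := by
  have hsq (t : ℝ) : Real.exp (2 * t * z - t ^ 2) = Real.exp (z ^ 2) * Real.exp (-(z - t) ^ 2) := by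
    rw [← Real.exp_add]
    ring_nf
  have hcancel : Real.exp ((z - t) ^ 2) * Real.exp (-(z - t) ^ 2) = 1 := by
    rw [← Real.exp_add, add_neg_cancel, Real.exp_zero]
  simp only [hsq, physHermite]
  rw [iteratedDeriv_const_mul_field,
    iteratedDeriv_comp_const_sub k (fun s ↦ Real.exp (-s ^ 2)) z]
  simp only [smul_eq_mul]
  linear_combination (-(-1) ^ k * Real.exp (z ^ 2) *
    iteratedDeriv k (fun s ↦ Real.exp (-s ^ 2)) (z - t)) * hcancel

lemma integral_pow_mul_cexp_gaussianReal_eq_physHermite (k : ℕ) (z t : ℝ) :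
    ∫ w, (2 * z + Complex.I * w) ^ k * Complex.exp (t * (2 * z + Complex.I * w))
        ∂gaussianReal 0 2 =
      (physHermite k (z - t) * Real.exp (2 * t * z - t ^ 2) : ℝ) := by
  have hgen (t : ℝ) : Complex.exp (t * (2 * z + Complex.I * (0 : ℝ)) +
      (2 : NNReal) * (t * Complex.I) ^ 2 / 2) = (Real.exp (2 * t * z - t ^ 2) : ℝ) := by
    push_cast
    rw [mul_pow, Complex.I_sq]
    ring_nf
  rw [integral_affine_pow_mul_cexp_gaussianReal]
  simp only [hgen]
  rw [iteratedDeriv_ofReal_comp (by fun_prop), iteratedDeriv_exp_two_mul_sub_sq]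

lemma integral_pow_mul_cexp_mul_exp_neg_sq_div_four (k : ℕ) (z t : ℝ) :
    ∫ w : ℝ, (2 * z + Complex.I * w) ^ k * Complex.exp (t * (2 * z + Complex.I * w)) *
        Complex.exp (-w ^ 2 / 4) =
      (2 * √Real.pi * (physHermite k (z - t) * Real.exp (2 * t * z - t ^ 2)) : ℝ) := by
  have hsqrt : √(2 * Real.pi * (2 : NNReal)) = 2 * √Real.pi := by
    rw [show 2 * Real.pi * (2 : NNReal) = 2 ^ 2 * Real.pi by push_cast; ring,
      Real.sqrt_mul (by positivity), Real.sqrt_sq zero_le_two]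
  have hpdf (w : ℝ) : Complex.exp (-w ^ 2 / 4) =
      (2 * √Real.pi : ℝ) * (gaussianPDFReal 0 2 w : ℂ) := by
    rw [gaussianPDFReal, hsqrt, ← Complex.ofReal_mul, mul_inv_cancel_left₀ (by positivity)]
    push_cast
    ring_nf
  have hmoment := integral_pow_mul_cexp_gaussianReal_eq_physHermite k z t
  rw [integral_gaussianReal_eq_integral_smul two_ne_zero] at hmoment
  rw [Complex.ofReal_mul (2 * √Real.pi), ← hmoment, ← integral_const_mul]
  refine integral_congr_ae (.of_forall fun w ↦ ?_)
  simp only [hpdf, Complex.real_smul]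
  ring

lemma inv_pow_mul_div_mul_two_sqrt_pi {r v : ℝ} (hr : 0 < r) (hv : 0 < v)
    (hrv : r ^ 2 = 2 * Real.pi * v) (k : ℕ) :
    (r ^ k)⁻¹ * (v / r) * (2 * √Real.pi) =
      (√((2 : ℝ) ^ ((k : ℤ) - 1) * Real.pi ^ k * v ^ ((k : ℤ) - 1)))⁻¹ := by
  rw [← Real.sqrt_inv, eq_comm, Real.sqrt_eq_iff_eq_sq (by positivity) (by positivity)]
  simp only [mul_pow, div_pow, inv_pow, ← pow_mul, mul_comm k 2, pow_mul _ 2, hrv,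
    Real.sq_sqrt Real.pi_pos.le]
  rw [zpow_sub_one₀ two_ne_zero, zpow_sub_one₀ hv.ne', zpow_natCast, zpow_natCast]
  field_simp

lemma hermite_gaussian_integrand_eq_rescaled {r v : ℝ} (hv : v ≠ 0)
    (hrv : r ^ 2 = 2 * Real.pi * v) (k : ℕ) (x y w : ℝ) :
    ((x : ℂ) + Complex.I / v * w) ^ k *
        Complex.exp (-(Real.pi / 2) * (v * x ^ 2 + w ^ 2 / v)) *
        Complex.exp (2 * Real.pi * Complex.I * w * y) =
      ((r ^ k)⁻¹ * Real.exp (-(Real.pi * v * (x ^ 2 / 2 + 2 * x * y))) : ℝ) *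
        ((2 * (r * x / 2 : ℝ) + Complex.I * (r / v * w : ℝ)) ^ k *
          Complex.exp ((r * y : ℝ) * (2 * (r * x / 2 : ℝ) + Complex.I * (r / v * w : ℝ))) *
          Complex.exp (-(r / v * w : ℝ) ^ 2 / 4)) := by
  have hrv' : (r : ℂ) ^ 2 = 2 * Real.pi * v := mod_cast hrv
  have hv' : (v : ℂ) ≠ 0 := mod_cast hv
  have hr : (r : ℂ) ≠ 0 := by
    rw [← pow_ne_zero_iff two_ne_zero, hrv']
    exact mul_ne_zero (mul_ne_zero two_ne_zero (mod_cast Real.pi_ne_zero)) hv'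
  have hbase : (2 * (r * x / 2 : ℝ) + Complex.I * (r / v * w : ℝ) : ℂ) =
      r * (x + Complex.I / v * w) := by
    push_cast
    field_simp
  have hexp : -(Real.pi / 2) * (v * x ^ 2 + w ^ 2 / v) + 2 * Real.pi * Complex.I * w * y =
      ((-(Real.pi * v * (x ^ 2 / 2 + 2 * x * y)) : ℝ) : ℂ) +
        (r * y : ℝ) * (r * (x + Complex.I / v * w)) + -(r / v * w : ℝ) ^ 2 / 4 := by
    push_cast
    field_simp
    rw [hrv']
    ring
  rw [hbase, mul_pow, mul_assoc, ← Complex.exp_add, hexp, Complex.exp_add, Complex.exp_add]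
  push_cast
  field_simp

/-- For a non-negative integer `k`, a positive real `v` and real `x`, `y`:
`∫_ℝ (x + (i/v)w)^k e^{−(π/2)(vx² + w²/v)} e^{2πiwy} dw
  = (2^{k−1} π^k v^{k−1})^{−1/2} H_k(√(2πv)(x/2 − y)) e^{−πv(x²/2 + 2y²)}`. -/
theorem hermite_gaussian_fourier_transform (k : ℕ) (v : ℝ) (hv : 0 < v) (x y : ℝ) :
    (∫ w : ℝ,
        ((x : ℂ) + Complex.I / (v : ℂ) * (w : ℂ)) ^ k *
          Complex.exp (-(((Real.pi : ℂ)) / 2) * ((v : ℂ) * (x : ℂ) ^ 2 + (w : ℂ) ^ 2 / (v : ℂ))) *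
          Complex.exp (2 * (Real.pi : ℂ) * Complex.I * (w : ℂ) * (y : ℂ)))
      = (((Real.sqrt ((2 : ℝ) ^ ((k : ℤ) - 1) * Real.pi ^ k * v ^ ((k : ℤ) - 1)))⁻¹ : ℝ) : ℂ) *
          ((physHermite k (Real.sqrt (2 * Real.pi * v) * (x / 2 - y)) : ℝ) : ℂ) *
          Complex.exp (-(Real.pi : ℂ) * (v : ℂ) * ((x : ℂ) ^ 2 / 2 + 2 * (y : ℂ) ^ 2)) := by
  set r := √(2 * Real.pi * v)
  have hr : 0 < r := Real.sqrt_pos.2 (by positivity)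
  have hrv : r ^ 2 = 2 * Real.pi * v := Real.sq_sqrt (by positivity)
  have hexp : Real.exp (-(Real.pi * v * (x ^ 2 / 2 + 2 * x * y))) *
      Real.exp (2 * (r * y) * (r * x / 2) - (r * y) ^ 2) =
      Real.exp (-Real.pi * v * (x ^ 2 / 2 + 2 * y ^ 2)) := by
    rw [← Real.exp_add]
    congr 1
    linear_combination (x * y - y ^ 2) * hrv
  have harg : r * (x / 2 - y) = r * x / 2 - r * y := by ring
  simp only [hermite_gaussian_integrand_eq_rescaled hv.ne' hrv]
  rw [integral_const_mul, Measure.integral_comp_mul_left fun w : ℝ ↦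
      (2 * (r * x / 2 : ℝ) + Complex.I * w) ^ k *
        Complex.exp ((r * y : ℝ) * (2 * (r * x / 2 : ℝ) + Complex.I * w)) *
        Complex.exp (-w ^ 2 / 4),
    integral_pow_mul_cexp_mul_exp_neg_sq_div_four, inv_div, abs_of_pos (div_pos hv hr),
    Complex.real_smul, ← inv_pow_mul_div_mul_two_sqrt_pi hr hv hrv, harg]
  norm_cast
  rw [← hexp]
  ring
end

section
/- Let μ be the Haar measure on the additive group ℚ₂ normalized so that μ(ℤ₂) = 1, and let ψ : ℚ₂ → ℂˣ be a continuous additive character with values in the unit circle that is trivial on ℤ₂ but nontrivial on (1/2)·ℤ₂. Then for all a, b ∈ ℚ₂ with 2a ∈ ℤ₂ˣ, ∫_{ℤ₂} ψ(a·x² + b·x) dμ(x) = 1 if b/a ∈ ℤ₂ˣ, and = 0 otherwise. -/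
open MeasureTheory
open scoped Classical

/-!
The residue field of `ℤ₂` has two elements, so `x² - x ∈ 2ℤ₂` for `x ∈ ℤ₂`. As `2a` is a unit, this
gives `a (x² - x) ∈ ℤ₂`, hence `ψ (a x² + b x) = ψ ((a + b) x)`: `ψ` sees the quadratic polynomial
as a linear one. By orthogonality of characters the integral is `1` when `a + b ∈ ℤ₂` and `0`
otherwise. Finally `a + b = a (1 + b / a)` lies in `ℤ₂` exactly when `b / a ≡ -1` modulo `2`, and
in a residue field with two elements this says that `b / a` is a unit.
-/

section Orthogonality

variable {G 𝕜 : Type*} [AddGroup G] [MeasurableSpace G] [MeasurableAdd G] [RCLike 𝕜]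
  (μ : Measure G) [μ.IsAddRightInvariant] {H : AddSubgroup G}

lemma setIntegral_addChar_eq_zero (hH : MeasurableSet (H : Set G)) {ψ : AddChar G 𝕜} {t : G}
    (ht : t ∈ H) (hψt : ψ t ≠ 1) : ∫ x in H, ψ x ∂μ = 0 := by
  have translate (x : G) : (H : Set G).indicator ψ (x + t) = (H : Set G).indicator ψ x * ψ t := by
    simp only [Set.indicator_apply, SetLike.mem_coe, H.add_mem_cancel_right ht,
      AddChar.map_add_eq_mul, ite_mul, zero_mul]
  have integral_eq_mul : ∫ x in H, ψ x ∂μ = (∫ x in H, ψ x ∂μ) * ψ t := by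
    calc ∫ x in H, ψ x ∂μ = ∫ x, (H : Set G).indicator ψ (x + t) ∂μ := by
          rw [integral_add_right_eq_self, integral_indicator hH]
      _ = (∫ x in H, ψ x ∂μ) * ψ t := by
          simp only [translate, integral_mul_const, integral_indicator hH]
  by_contra integral_ne_zero
  exact hψt ((left_eq_mul₀ integral_ne_zero).mp integral_eq_mul)

lemma setIntegral_addChar (hH : MeasurableSet (H : Set G)) (ψ : AddChar G 𝕜) :
    ∫ x in H, ψ x ∂μ = if ∀ x ∈ H, ψ x = 1 then (μ.real H : 𝕜) else 0 := by
  split_ifs with trivial_on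
  · simp [setIntegral_congr_fun hH trivial_on, Algebra.smul_def]
  · push Not at trivial_on
    obtain ⟨t, ht, hψt⟩ := trivial_on
    exact setIntegral_addChar_eq_zero μ hH ht hψt

end Orthogonality

section PadicNorm

variable {p : ℕ} [Fact p.Prime]

lemma padic_norm_lt_one_iff_norm_le_inv {x : ℚ_[p]} : ‖x‖ < 1 ↔ ‖x‖ ≤ (p : ℝ)⁻¹ := by
  simpa using (Padic.norm_le_pow_iff_norm_lt_pow_add_one x (-1)).symm

lemma padicInt_toZMod_eq_zero_iff_norm_lt_one {x : ℤ_[p]} : PadicInt.toZMod x = 0 ↔ ‖x‖ < 1 := by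
  rw [← RingHom.mem_ker, PadicInt.ker_toZMod, IsLocalRing.mem_maximalIdeal, PadicInt.mem_nonunits]

lemma padicInt_norm_pow_prime_sub_self_lt_one (x : ℤ_[p]) : ‖x ^ p - x‖ < 1 := by
  rw [← padicInt_toZMod_eq_zero_iff_norm_lt_one, map_sub, map_pow, ZMod.pow_card, sub_self]

lemma padicInt_two_norm_add_one_lt_one {x : ℤ_[2]} (hx : ‖x‖ = 1) : ‖x + 1‖ < 1 := by
  have residue_ne_zero : PadicInt.toZMod x ≠ 0 := fun h ↦
    (padicInt_toZMod_eq_zero_iff_norm_lt_one.mp h).ne hx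
  rw [← padicInt_toZMod_eq_zero_iff_norm_lt_one, map_add, map_one]
  generalize PadicInt.toZMod x = r at residue_ne_zero ⊢
  decide +revert

lemma padic_two_norm_add_one_lt_one_iff {x : ℚ_[2]} : ‖x + 1‖ < 1 ↔ ‖x‖ = 1 := by
  refine ⟨fun h ↦ ?_, fun hx ↦ ?_⟩
  · simpa using Padic.norm_eq_of_norm_add_lt_right (z2 := 1) (by simpa using h)
  · exact padicInt_two_norm_add_one_lt_one (x := ⟨x, hx.le⟩) hx

lemma padic_two_norm_add_le_one_iff {a b : ℚ_[2]} (ha : ‖a‖ = 2) :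
    ‖a + b‖ ≤ 1 ↔ ‖b / a‖ = 1 := by
  have ha₀ : a ≠ 0 := norm_ne_zero_iff.mp (by simp [ha])
  calc ‖a + b‖ ≤ 1 ↔ 2 * ‖b / a + 1‖ ≤ 1 := by
        rw [← ha, ← norm_mul, mul_add, mul_div_cancel₀ b ha₀, mul_one, add_comm]
    _ ↔ ‖b / a + 1‖ < 1 := by
        rw [padic_norm_lt_one_iff_norm_le_inv, ← le_inv_mul_iff₀ two_pos, mul_one, Nat.cast_two]
    _ ↔ ‖b / a‖ = 1 := padic_two_norm_add_one_lt_one_iff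

end PadicNorm

lemma addChar_quadratic_eq_linear {M : Type*} [Monoid M] {ψ : AddChar ℚ_[2] M}
    (hψ : ∀ x : ℚ_[2], ‖x‖ ≤ 1 → ψ x = 1) {a x : ℚ_[2]} (ha : ‖a‖ ≤ 2) (b : ℚ_[2])
    (hx : ‖x‖ ≤ 1) : ψ (a * x ^ 2 + b * x) = ψ ((a + b) * x) := by
  have norm_sub_lt_one : ‖x ^ 2 - x‖ < 1 := padicInt_norm_pow_prime_sub_self_lt_one ⟨x, hx⟩
  have integral_difference : ‖a * (x ^ 2 - x)‖ ≤ 1 :=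
    calc ‖a * (x ^ 2 - x)‖ = ‖a‖ * ‖x ^ 2 - x‖ := norm_mul _ _
      _ ≤ 2 * 2⁻¹ := by
        gcongr
        exact_mod_cast padic_norm_lt_one_iff_norm_le_inv.mp norm_sub_lt_one
      _ = 1 := mul_inv_cancel₀ two_ne_zero
  calc ψ (a * x ^ 2 + b * x) = ψ (a * (x ^ 2 - x) + (a + b) * x) := by ring_nf
    _ = ψ ((a + b) * x) := by
        rw [AddChar.map_add_eq_mul, hψ _ integral_difference, one_mul]

/-- An additive character of `ℚ_p` has order zero if it is trivial on `ℤ_p` but not on the larger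
fractional ideal `p⁻¹ ℤ_p`. Both are encoded as closed balls, of radius `1` and `p`. -/
structure HasOrderZero {p : ℕ} [Fact p.Prime] {M : Type*} [Monoid M] (ψ : AddChar ℚ_[p] M) :
    Prop where
  map_eq_one : ∀ x : ℚ_[p], ‖x‖ ≤ 1 → ψ x = 1
  exists_map_ne_one : ∃ x : ℚ_[p], ‖x‖ ≤ p ∧ ψ x ≠ 1

namespace HasOrderZero

variable {p : ℕ} [Fact p.Prime]

lemma forall_map_mul_eq_one_iff {M : Type*} [Monoid M] {ψ : AddChar ℚ_[p] M}
    (hψ : HasOrderZero ψ) {c : ℚ_[p]} :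
    (∀ x : ℚ_[p], ‖x‖ ≤ 1 → ψ (c * x) = 1) ↔ ‖c‖ ≤ 1 := by
  refine ⟨fun trivial_on ↦ ?_, fun hc x hx ↦ hψ.map_eq_one _ ?_⟩
  · by_contra! hc
    obtain ⟨t, ht, hψt⟩ := hψ.exists_map_ne_one
    have hc₀ : c ≠ 0 := norm_pos_iff.mp (one_pos.trans hc)
    have hc_inv : ‖c⁻¹‖ ≤ (p : ℝ)⁻¹ :=
      padic_norm_lt_one_iff_norm_le_inv.mp (by rw [norm_inv]; exact inv_lt_one_of_one_lt₀ hc)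
    have preimage_mem : ‖c⁻¹ * t‖ ≤ 1 :=
      calc ‖c⁻¹ * t‖ = ‖c⁻¹‖ * ‖t‖ := norm_mul _ _
        _ ≤ (p : ℝ)⁻¹ * p := by gcongr
        _ ≤ 1 := inv_mul_le_one
    exact hψt (by simpa [hc₀] using trivial_on _ preimage_mem)
  · rw [norm_mul]
    exact mul_le_one₀ hc (norm_nonneg x) hx

lemma setIntegral_map_mul {𝕜 : Type*} [RCLike 𝕜] [MeasurableSpace ℚ_[p]] [BorelSpace ℚ_[p]]
    (μ : Measure ℚ_[p]) [μ.IsAddRightInvariant] {ψ : AddChar ℚ_[p] 𝕜}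
    (hψ : HasOrderZero ψ) (c : ℚ_[p]) :
    ∫ x in {y : ℚ_[p] | ‖y‖ ≤ 1}, ψ (c * x) ∂μ
      = if ‖c‖ ≤ 1 then (μ.real {y : ℚ_[p] | ‖y‖ ≤ 1} : 𝕜) else 0 := by
  have hℤ : MeasurableSet {y : ℚ_[p] | ‖y‖ ≤ 1} := measurableSet_le measurable_norm measurable_const
  rw [← if_congr hψ.forall_map_mul_eq_one_iff rfl rfl]
  exact setIntegral_addChar μ (H := (PadicInt.subring p).toAddSubgroup) hℤ (ψ.mulShift c)

end HasOrderZero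

/-- Let `μ` be the Haar measure on `ℚ₂` normalized so that `μ(ℤ₂) = 1`,
and `ψ` a continuous unitary additive character of `ℚ₂` trivial on `ℤ₂` but nontrivial on
`(1/2)ℤ₂`.  Then for all `a, b ∈ ℚ₂` with `2a ∈ ℤ₂ˣ`,
`∫_{ℤ₂} ψ (a x² + b x) dμ(x)` equals `1` if `b/a ∈ ℤ₂ˣ`, and `0` otherwise. -/
theorem padic2_quadratic_character_integral
    [MeasurableSpace ℚ_[2]] [BorelSpace ℚ_[2]]
    (μ : Measure ℚ_[2]) [μ.IsAddHaarMeasure]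
    (hμ : μ {x : ℚ_[2] | ‖x‖ ≤ 1} = 1)
    (ψ : ℚ_[2] → ℂ)
    (hψcont : Continuous ψ)
    (hψadd : ∀ x y : ℚ_[2], ψ (x + y) = ψ x * ψ y)
    (hψnorm : ∀ x : ℚ_[2], ‖ψ x‖ = 1)
    (hψtriv : ∀ x : ℚ_[2], ‖x‖ ≤ 1 → ψ x = 1)
    (hψnontriv : ∃ x : ℚ_[2], ‖x‖ ≤ 2 ∧ ψ x ≠ 1)
    (a b : ℚ_[2]) (ha : ‖2 * a‖ = 1) :
    (∫ x in {y : ℚ_[2] | ‖y‖ ≤ 1}, ψ (a * x ^ 2 + b * x) ∂μ)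
      = if ‖b / a‖ = 1 then 1 else 0 := by
  have norm_a : ‖a‖ = 2 := by
    have norm_two : ‖(2 : ℚ_[2])‖ = 2⁻¹ := by simpa using Padic.norm_p (p := 2)
    rw [norm_mul, norm_two] at ha
    linarith
  let χ : AddChar ℚ_[2] ℂ := ⟨ψ, hψtriv 0 (by simp), hψadd⟩
  have hχ : HasOrderZero χ := ⟨hψtriv, by exact_mod_cast hψnontriv⟩
  have hℤ : MeasurableSet {y : ℚ_[2] | ‖y‖ ≤ 1} := measurableSet_le measurable_norm measurable_const
  calc ∫ x in {y : ℚ_[2] | ‖y‖ ≤ 1}, ψ (a * x ^ 2 + b * x) ∂μ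
      = ∫ x in {y : ℚ_[2] | ‖y‖ ≤ 1}, χ ((a + b) * x) ∂μ :=
        setIntegral_congr_fun hℤ fun _ hx ↦
          addChar_quadratic_eq_linear hχ.map_eq_one norm_a.le b hx
    _ = if ‖a + b‖ ≤ 1 then 1 else 0 := by
        simp [hχ.setIntegral_map_mul μ, Measure.real, hμ]
    _ = if ‖b / a‖ = 1 then 1 else 0 := by
        simp only [padic_two_norm_add_le_one_iff norm_a]
end

section
/- Let μ be the Haar measure on the additive group ℚ₂ normalized so that μ(ℤ₂) = 1, and let ψ : ℚ₂ → ℂˣ be a continuous additive character with values in the unit circle that is trivial on ℤ₂ but nontrivial on (1/2)·ℤ₂. Then for every a ∈ ℚ₂ with 2a ∈ ℤ₂ˣ, ∫_{ℤ₂} ψ(a·x²) dμ(x) = 0. -/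
/-!
For `b ∈ ℤ₂` the substitution `x ↦ b + x` preserves `ℤ₂` and the Haar measure. It multiplies
`ψ (a x²)` by the constant `ψ (a b²)`, because the cross term `2abx` is integral. So the integral
vanishes once `ψ (a b²) ≠ 1` for some integral `b`. The same computation works over a
nonarchimedean local field in which `2` is a uniformizer: Frobenius is surjective on the finite
residue field, so every integral element is a square modulo `2`, and hence the elements `a b²`
represent all classes of `(1/2) 𝒪` modulo the ring of integers `𝒪`, including one on which `ψ` is
nontrivial.
-/

open MeasureTheory

section Translation

variable {G 𝕜 E : Type*} [AddGroup G] [MeasurableSpace G] [MeasurableAdd G]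
  [NormedDivisionRing 𝕜] [NormedAddCommGroup E] [NormedSpace ℝ E] [Module 𝕜 E]
  [NormSMulClass 𝕜 E] [SMulCommClass ℝ 𝕜 E]

lemma integral_eq_zero_of_add_left_eq_smul (μ : Measure G) [μ.IsAddLeftInvariant]
    {f : G → E} {g : G} {c : 𝕜} (hc : c ≠ 1) (hf : ∀ x, f (g + x) = c • f x) :
    ∫ x, f x ∂μ = 0 := by
  have hfix : c • ∫ x, f x ∂μ = ∫ x, f x ∂μ := by
    rw [← integral_smul, ← integral_add_left_eq_self f g]
    simp only [hf]
  have hzero : (c - 1) • ∫ x, f x ∂μ = 0 := by rw [sub_smul, one_smul, hfix, sub_self]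
  exact (smul_eq_zero.mp hzero).resolve_left (sub_ne_zero.mpr hc)

lemma setIntegral_addSubgroup_eq_zero_of_add_left_eq_smul (μ : Measure G) [μ.IsAddLeftInvariant]
    {H : AddSubgroup G} (hH : MeasurableSet (H : Set G)) {f : G → E} {g : G} (hg : g ∈ H)
    {c : 𝕜} (hc : c ≠ 1) (hf : ∀ x ∈ H, f (g + x) = c • f x) :
    ∫ x in H, f x ∂μ = 0 := by
  rw [← integral_indicator hH]
  refine integral_eq_zero_of_add_left_eq_smul μ (g := g) hc fun x ↦ ?_
  by_cases hx : x ∈ H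
  · simp [hx, H.add_mem hg hx, hf x hx]
  · simp [hx, H.add_mem_cancel_left hg]

end Translation

lemma setIntegral_addChar_mul_sq_eq_zero {R 𝕜 : Type*} [CommRing R] [MeasurableSpace R]
    [MeasurableAdd R] [NormedDivisionRing 𝕜] [NormedAlgebra ℝ 𝕜] (μ : Measure R)
    [μ.IsAddLeftInvariant]
    {S : Subring R} (hS : MeasurableSet (S : Set R)) (ψ : AddChar R 𝕜) {a b : R} (hb : b ∈ S)
    (hcross : ∀ x ∈ S, ψ (2 * a * x) = 1) (hψb : ψ (a * b ^ 2) ≠ 1) :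
    ∫ x in S, ψ (a * x ^ 2) ∂μ = 0 := by
  refine setIntegral_addSubgroup_eq_zero_of_add_left_eq_smul (H := S.toAddSubgroup) μ hS hb hψb
    fun x hx ↦ ?_
  have hsq : a * (b + x) ^ 2 = a * b ^ 2 + a * x ^ 2 + 2 * a * (b * x) := by ring
  rw [hsq, AddChar.map_add_eq_mul, AddChar.map_add_eq_mul, hcross _ (S.mul_mem hb hx), mul_one,
    smul_eq_mul]

section LocalField

open scoped NormedField Valued

variable {K : Type*} [NontriviallyNormedField K] [IsUltrametricDist K]

variable (K) in
lemma finite_residueField_of_properSpace [ProperSpace K] : Finite 𝓀[K] := by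
  have : (Valued.v : Valuation K _).RankOne :=
    inferInstanceAs (NormedField.valuation (K := K)).RankOne
  have : CompactSpace 𝒪[K] := by
    refine isCompact_iff_compactSpace.mp ?_
    convert isCompact_closedBall (0 : K) 1
    ext x
    simp [Valued.integer.mem_iff]
  have : IsDiscreteValuationRing 𝒪[K] := Valued.integer.isDiscreteValuationRing_of_compactSpace
  exact Valued.integer.totallyBounded_iff_finite_residueField.mp isCompact_univ.totallyBounded

lemma residue_eq_zero_iff_norm_lt_one (x : 𝒪[K]) :
    IsLocalRing.residue 𝒪[K] x = 0 ↔ ‖x‖ < 1 := by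
  rw [IsLocalRing.residue_eq_zero_iff, IsLocalRing.mem_maximalIdeal, mem_nonunits_iff,
    Valued.integer.isUnit_iff_norm_eq_one, (Valued.integer.norm_le_one x).lt_iff_ne]

lemma exists_norm_sub_pow_lt_one [PerfectField 𝓀[K]] {p : ℕ} [Fact p.Prime] (hp : ‖(p : K)‖ < 1)
    {y : K} (hy : ‖y‖ ≤ 1) : ∃ b : K, ‖b‖ ≤ 1 ∧ ‖y - b ^ p‖ < 1 := by
  have : CharP 𝓀[K] p := by
    refine (CharP.charP_iff_prime_eq_zero Fact.out).mpr ?_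
    simpa using (residue_eq_zero_iff_norm_lt_one (p : 𝒪[K])).mpr hp
  have : PerfectRing 𝓀[K] p := PerfectField.toPerfectRing p
  obtain ⟨β, hβ⟩ := surjective_frobenius 𝓀[K] p
    (IsLocalRing.residue 𝒪[K] ⟨y, Valued.integer.mem_iff.mpr hy⟩)
  obtain ⟨b, rfl⟩ := IsLocalRing.residue_surjective β
  refine ⟨b, Valued.integer.norm_le_one b,
    (residue_eq_zero_iff_norm_lt_one (⟨y, Valued.integer.mem_iff.mpr hy⟩ - b ^ p)).mp ?_⟩
  rw [map_sub, map_pow, ← frobenius_def, hβ, sub_self]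

lemma exists_addChar_mul_sq_ne_one [PerfectField 𝓀[K]] {M : Type*} [Monoid M]
    (h2 : ∀ x : K, ‖x‖ < 1 ↔ ‖x‖ ≤ ‖(2 : K)‖) (ψ : AddChar K M)
    (hψtriv : ∀ x : K, ‖x‖ ≤ 1 → ψ x = 1) (hψnontriv : ∃ x : K, ‖2 * x‖ ≤ 1 ∧ ψ x ≠ 1)
    {a : K} (ha : ‖2 * a‖ = 1) :
    ∃ b : K, ‖b‖ ≤ 1 ∧ ψ (a * b ^ 2) ≠ 1 := by
  obtain ⟨x, hx, hψx⟩ := hψnontriv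
  have h2a : 2 * a ≠ 0 := norm_ne_zero_iff.mp (ha ▸ one_ne_zero)
  have hxa : ‖x / a‖ ≤ 1 := by
    rwa [← mul_div_mul_left x a (left_ne_zero_of_mul h2a), norm_div, ha, div_one]
  obtain ⟨b, hb, hxb⟩ := exists_norm_sub_pow_lt_one (p := 2) (by simpa using (h2 2).mpr le_rfl) hxa
  have hrem : ‖a * (x / a - b ^ 2)‖ ≤ 1 := calc
    ‖a * (x / a - b ^ 2)‖ = ‖x / a - b ^ 2‖ * ‖a‖ := by rw [norm_mul, mul_comm]
    _ ≤ ‖(2 : K)‖ * ‖a‖ := by gcongr; exact (h2 _).mp hxb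
    _ = 1 := by rw [← norm_mul, ha]
  have hdecomp : x = a * b ^ 2 + a * (x / a - b ^ 2) := by
    rw [mul_sub, mul_div_cancel₀ x (right_ne_zero_of_mul h2a)]; ring
  refine ⟨b, hb, ?_⟩
  rwa [hdecomp, AddChar.map_add_eq_mul, hψtriv _ hrem, mul_one] at hψx

/-- The hypothesis `h2` says that `2` generates the maximal ideal of `𝒪[K]`. -/
theorem padic2_gauss_sum_vanishes_general [ProperSpace K] [MeasurableSpace K] [BorelSpace K]
    {𝕜 : Type*} [RCLike 𝕜]
    (h2 : ∀ x : K, ‖x‖ < 1 ↔ ‖x‖ ≤ ‖(2 : K)‖)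
    (μ : Measure K) [μ.IsAddHaarMeasure] (ψ : AddChar K 𝕜)
    (hψtriv : ∀ x : K, ‖x‖ ≤ 1 → ψ x = 1) (hψnontriv : ∃ x : K, ‖2 * x‖ ≤ 1 ∧ ψ x ≠ 1)
    {a : K} (ha : ‖2 * a‖ = 1) :
    ∫ x in {y : K | ‖y‖ ≤ 1}, ψ (a * x ^ 2) ∂μ = 0 := by
  have := finite_residueField_of_properSpace K
  obtain ⟨b, hb, hψb⟩ := exists_addChar_mul_sq_ne_one h2 ψ hψtriv hψnontriv ha
  have hint : {y : K | ‖y‖ ≤ 1} = 𝒪[K] := Set.ext fun _ ↦ Valued.integer.mem_iff.symm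
  have hmeas : MeasurableSet {y : K | ‖y‖ ≤ 1} :=
    (isClosed_le continuous_norm continuous_const).measurableSet
  rw [hint] at hmeas ⊢
  refine setIntegral_addChar_mul_sq_eq_zero μ hmeas ψ (Valued.integer.mem_iff.mpr hb)
    (fun x hx ↦ hψtriv _ ?_) hψb
  rw [norm_mul, ha, one_mul]
  exact Valued.integer.mem_iff.mp hx

end LocalField

lemma padic_norm_lt_one_iff_le_norm_p {p : ℕ} [Fact p.Prime] (x : ℚ_[p]) :
    ‖x‖ < 1 ↔ ‖x‖ ≤ ‖(p : ℚ_[p])‖ := by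
  simpa using (Padic.norm_le_pow_iff_norm_lt_pow_add_one x (-1)).symm

/-- Let `μ` be the Haar measure on `ℚ₂` normalized so that `μ(ℤ₂) = 1`,
and `ψ` a continuous unitary additive character of `ℚ₂` trivial on `ℤ₂` but nontrivial on
`(1/2)ℤ₂`.  Then for every `a ∈ ℚ₂` with `2a ∈ ℤ₂ˣ`, `∫_{ℤ₂} ψ (a x²) dμ(x) = 0`. -/
theorem padic2_gauss_sum_vanishes
    [MeasurableSpace ℚ_[2]] [BorelSpace ℚ_[2]]
    (μ : Measure ℚ_[2]) [μ.IsAddHaarMeasure]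
    (hμ : μ {x : ℚ_[2] | ‖x‖ ≤ 1} = 1)
    (ψ : ℚ_[2] → ℂ)
    (hψcont : Continuous ψ)
    (hψadd : ∀ x y : ℚ_[2], ψ (x + y) = ψ x * ψ y)
    (hψnorm : ∀ x : ℚ_[2], ‖ψ x‖ = 1)
    (hψtriv : ∀ x : ℚ_[2], ‖x‖ ≤ 1 → ψ x = 1)
    (hψnontriv : ∃ x : ℚ_[2], ‖x‖ ≤ 2 ∧ ψ x ≠ 1)
    (a : ℚ_[2]) (ha : ‖2 * a‖ = 1) :
    (∫ x in {y : ℚ_[2] | ‖y‖ ≤ 1}, ψ (a * x ^ 2) ∂μ) = 0 := by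
  refine padic2_gauss_sum_vanishes_general padic_norm_lt_one_iff_le_norm_p μ
    ⟨ψ, hψtriv 0 (by simp), hψadd⟩ hψtriv ?_ ha
  have h2 : ‖(2 : ℚ_[2])‖ = 2⁻¹ := Padic.norm_p
  simpa [h2, inv_mul_le_iff₀] using hψnontriv
end

section
/- Let p be a prime, μ the Haar measure on the additive group ℚ_p normalized so that μ(ℤ_p) = 1, and ψ : ℚ_p → ℂˣ a continuous additive character with values in the unit circle that is trivial on ℤ_p but nontrivial on p⁻¹ℤ_p. Then for every x ∈ ℚ_p, ∫_{ℤ_pˣ} ψ(x·y) dμ(y) = 1 − p⁻¹ if x ∈ ℤ_p; = −p⁻¹ if p·x ∈ ℤ_pˣ; and = 0 otherwise. -/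
open MeasureTheory
open scoped Classical

/-!
The sphere `𝒪ˣ` is the closed unit ball `𝒪` minus the open unit ball `𝔪 = ϖ𝒪`. Both balls are
additive subgroups, and the integral of a character over a subgroup is the measure of the subgroup
or `0`, according to whether the character is trivial there. For `ψ` of order zero, `y ↦ ψ (x y)` is
trivial on `𝒪` exactly when `‖x‖ ≤ 1`, hence trivial on `ϖ𝒪` exactly when `‖ϖ x‖ ≤ 1`. As `𝔪` has
index `q`, the order of the residue field, in `𝒪`, the integral over `𝒪ˣ` is the measure of `𝒪`
times `𝟙(‖x‖ ≤ 1) - q⁻¹ 𝟙(‖ϖ x‖ ≤ 1)`.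
-/

open Metric IsUltrametricDist
open scoped Pointwise

lemma isFiniteRelIndex_of_isOpen_of_isCompact {G : Type*} [AddGroup G] [TopologicalSpace G]
    [IsTopologicalAddGroup G] {H L : AddSubgroup G} (hH : IsOpen (H : Set G))
    (hL : IsCompact (L : Set G)) : H.IsFiniteRelIndex L := by
  have : CompactSpace L := isCompact_iff_compactSpace.1 hL
  have : Finite (L ⧸ H.addSubgroupOf L) :=
    (H.addSubgroupOf L).quotient_finite_of_isOpen (L.addSubgroupOf_isOpen H hH)
  exact ⟨AddSubgroup.index_ne_zero_of_finite⟩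

section AddGroup

variable {G : Type*} [AddGroup G] [MeasurableSpace G] [MeasurableAdd G] (μ : Measure G)

lemma relIndex_mul_measure [μ.IsAddLeftInvariant] {H L : AddSubgroup G} [H.IsFiniteRelIndex L]
    (hHL : H ≤ L) (hH : MeasurableSet (H : Set G)) (hL : MeasurableSet (L : Set G)) :
    H.relIndex L * μ H = μ L := by
  have hemb : MeasurableEmbedding L.subtype := .subtype_coe hL
  have : MeasurableAdd L :=
    { measurable_const_add c := (measurable_subtype_coe.const_add (c : G)).subtype_mk
      measurable_add_const c := (measurable_subtype_coe.add_const (c : G)).subtype_mk }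
  have : (μ.comap L.subtype).IsAddLeftInvariant := .comap μ hemb
  have h := (H.addSubgroupOf L).index_mul_measure (measurable_subtype_coe hH) (μ.comap L.subtype)
  have himage : L.subtype '' (H.addSubgroupOf L) = H :=
    congr_arg SetLike.coe (AddSubgroup.map_addSubgroupOf_eq_of_le hHL)
  rwa [hemb.comap_apply, hemb.comap_apply, himage, Set.image_univ, AddSubgroup.coe_subtype,
    Subtype.range_coe] at h

lemma setIntegral_addChar_eq_ite {𝕜 : Type*} [RCLike 𝕜] [μ.IsAddRightInvariant]
    (χ : AddChar G 𝕜) (H : AddSubgroup G) (hH : MeasurableSet (H : Set G)) :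
    ∫ y in H, χ y ∂μ = if ∀ y ∈ H, χ y = 1 then (μ.real H : 𝕜) else 0 := by
  split_ifs with hχ
  · rw [setIntegral_congr_fun hH (g := fun _ ↦ (1 : 𝕜)) hχ]
    simp [RCLike.real_smul_eq_coe_mul]
  · push Not at hχ
    obtain ⟨a, haH, ha⟩ := hχ
    -- Translating by `a` multiplies the integral by `χ a ≠ 1`.
    have htranslate : (∫ y in H, χ y ∂μ) * χ a = ∫ y in H, χ y ∂μ := by
      rw [← integral_mul_const, ← integral_indicator hH, ← integral_indicator hH,
        ← integral_add_right_eq_self ((H : Set G).indicator χ) a]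
      simp only [Set.indicator, SetLike.mem_coe, H.add_mem_cancel_right haH, χ.map_add_eq_mul]
    by_contra hne
    exact ha ((mul_eq_left₀ hne).1 htranslate)

end AddGroup

section NormedField

variable {K : Type*} [NormedField K]

/-- The additive character `ψ` has order zero: the scalars `x` such that `ψ` is trivial on `x𝒪`,
where `𝒪` is the closed unit ball, are exactly those in `𝒪`. -/
def HasOrderZero_s13 {M : Type*} [Monoid M] (ψ : AddChar K M) : Prop :=
  ∀ x, (∀ y ∈ closedBall (0 : K) 1, ψ (x * y) = 1) ↔ ‖x‖ ≤ 1

/- Here and below, `hϖ` encodes that `ϖ` is a uniformizer: it generates the maximal ideal of `𝒪`. -/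
lemma one_le_norm_mul_of_one_lt_norm {ϖ x : K} (hϖ : ball (0 : K) 1 = closedBall 0 ‖ϖ‖)
    (hx : 1 < ‖x‖) : 1 ≤ ‖ϖ * x‖ := by
  have hinv : x⁻¹ ∈ ball (0 : K) 1 := by simpa using inv_lt_one_of_one_lt₀ hx
  rw [hϖ, mem_closedBall_zero_iff, norm_inv] at hinv
  rw [norm_mul]
  exact (inv_le_iff_one_le_mul₀ (by positivity)).1 hinv

lemma hasOrderZero_of_exists_ne_one {M : Type*} [Monoid M] {ψ : AddChar K M} {ϖ : K}
    (hϖ : ball (0 : K) 1 = closedBall 0 ‖ϖ‖) (htriv : ∀ x, ‖x‖ ≤ 1 → ψ x = 1)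
    (hnontriv : ∃ x, ‖ϖ * x‖ ≤ 1 ∧ ψ x ≠ 1) : HasOrderZero_s13 ψ := by
  intro x
  refine ⟨fun h ↦ ?_, fun hx y hy ↦ htriv _ ?_⟩
  · by_contra! hx
    obtain ⟨a, ha, hψa⟩ := hnontriv
    have hϖx : 1 ≤ ‖ϖ * x‖ := one_le_norm_mul_of_one_lt_norm hϖ hx
    have hax : ‖a / x‖ ≤ 1 := by
      have hle : ‖ϖ‖ * ‖a‖ ≤ ‖ϖ‖ * ‖x‖ := by simpa only [norm_mul] using ha.trans hϖx
      have hϖ₀ : 0 < ‖ϖ‖ :=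
        pos_of_mul_pos_left (one_pos.trans_le (norm_mul ϖ x ▸ hϖx)) (norm_nonneg x)
      rw [norm_div]
      exact div_le_one_of_le₀ (le_of_mul_le_mul_left hle hϖ₀) (norm_nonneg x)
    have hx₀ : x ≠ 0 := norm_pos_iff.1 (one_pos.trans hx)
    exact hψa (mul_div_cancel₀ a hx₀ ▸ h _ (mem_closedBall_zero_iff.2 hax))
  · rw [norm_mul]
    exact mul_le_one₀ hx (norm_nonneg _) (mem_closedBall_zero_iff.1 hy)

namespace HasOrderZero_s13

variable {M : Type*} [Monoid M] {ψ : AddChar K M}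

lemma continuous [TopologicalSpace M] (hψ : HasOrderZero_s13 ψ) : Continuous ψ := by
  refine IsLocallyConstant.continuous <| (IsLocallyConstant.iff_exists_open _).2 fun x ↦
    ⟨ball x 1, isOpen_ball, mem_ball_self one_pos, fun y hy ↦ ?_⟩
  have hyx : ψ (y - x) = 1 := by
    simpa using (hψ 1).2 norm_one.le (y - x) (by simpa [dist_eq_norm] using (mem_ball.1 hy).le)
  rw [← sub_add_cancel y x, ψ.map_add_eq_mul, hyx, one_mul]

lemma forall_ball_eq_one_iff (hψ : HasOrderZero_s13 ψ) {ϖ : K}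
    (hϖ : ball (0 : K) 1 = closedBall 0 ‖ϖ‖) (x : K) :
    (∀ y ∈ ball (0 : K) 1, ψ (x * y) = 1) ↔ ‖ϖ * x‖ ≤ 1 := by
  have hsmul : ball (0 : K) 1 = ϖ • closedBall (0 : K) 1 := by
    rw [hϖ, _root_.smul_closedBall _ _ zero_le_one, smul_zero, mul_one]
  rw [← hψ (ϖ * x), hsmul, ← Set.image_smul, Set.forall_mem_image]
  simp only [smul_eq_mul, mul_left_comm, mul_assoc]

end HasOrderZero_s13

variable [IsUltrametricDist K]

variable (K) in
/-- The closed unit ball of an ultrametric field as an additive subgroup: the ring of integers. -/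
abbrev closedUnitBall : AddSubgroup K := closedBall_openAddSubgroup K one_pos

variable (K) in
/-- The open unit ball of an ultrametric field as an additive subgroup: the maximal ideal of the
ring of integers. -/
abbrev openUnitBall : AddSubgroup K := ball_openAddSubgroup K one_pos

variable (K) in
/-- The index of the open unit ball in the closed unit ball of `K`, that is, the number of elements
of the residue field of `K` (and `0` if the residue field is infinite). -/
noncomputable def residueCard : ℕ := (openUnitBall K).relIndex (closedUnitBall K)

section Measure

variable [MeasurableSpace K] [BorelSpace K] (μ : Measure K)

lemma measureReal_ball_one [ProperSpace K] [μ.IsAddLeftInvariant] :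
    μ.real (ball (0 : K) 1) = (residueCard K : ℝ)⁻¹ * μ.real (closedBall (0 : K) 1) := by
  have hfin := isFiniteRelIndex_of_isOpen_of_isCompact (ball_openAddSubgroup K one_pos).isOpen
    (L := closedUnitBall K) (isCompact_closedBall 0 1)
  have hindex : (residueCard K : ℝ) ≠ 0 := Nat.cast_ne_zero.2 hfin.relIndex_ne_zero
  have hmeasure : residueCard K * μ (ball (0 : K) 1) = μ (closedBall (0 : K) 1) :=
    relIndex_mul_measure μ (H := openUnitBall K) (L := closedUnitBall K)
      ball_subset_closedBall measurableSet_ball measurableSet_closedBall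
  rw [eq_inv_mul_iff_mul_eq₀ hindex]
  simpa [measureReal_def] using congr_arg ENNReal.toReal hmeasure

variable {𝕜 : Type*} [RCLike 𝕜] {ψ : AddChar K 𝕜}

lemma HasOrderZero_s13.setIntegral_closedBall [μ.IsAddRightInvariant] (hψ : HasOrderZero_s13 ψ) (x : K) :
    ∫ y in closedBall 0 1, ψ (x * y) ∂μ =
      if ‖x‖ ≤ 1 then (μ.real (closedBall (0 : K) 1) : 𝕜) else 0 := by
  rw [← if_congr (hψ x) rfl rfl]
  exact setIntegral_addChar_eq_ite μ (ψ.mulShift x) (closedUnitBall K) measurableSet_closedBall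

lemma HasOrderZero_s13.setIntegral_ball [μ.IsAddRightInvariant] (hψ : HasOrderZero_s13 ψ) {ϖ : K}
    (hϖ : ball (0 : K) 1 = closedBall 0 ‖ϖ‖) (x : K) :
    ∫ y in ball 0 1, ψ (x * y) ∂μ =
      if ‖ϖ * x‖ ≤ 1 then (μ.real (ball (0 : K) 1) : 𝕜) else 0 := by
  rw [← if_congr (hψ.forall_ball_eq_one_iff hϖ x) rfl rfl]
  exact setIntegral_addChar_eq_ite μ (ψ.mulShift x) (openUnitBall K) measurableSet_ball

theorem padic_character_integral_over_units_general [ProperSpace K] [μ.IsAddLeftInvariant]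
    [IsFiniteMeasureOnCompacts μ] (hψ : HasOrderZero_s13 ψ) {ϖ : K}
    (hϖ : ball (0 : K) 1 = closedBall 0 ‖ϖ‖) (x : K) :
    ∫ y in sphere 0 1, ψ (x * y) ∂μ =
      (μ.real (closedBall (0 : K) 1) : 𝕜) *
        if ‖x‖ ≤ 1 then 1 - (residueCard K : 𝕜)⁻¹
        else if ‖ϖ * x‖ = 1 then -(residueCard K : 𝕜)⁻¹ else 0 := by
  have hint : IntegrableOn (fun y ↦ ψ (x * y)) (closedBall 0 1) μ :=
    (hψ.continuous.comp (continuous_const_mul x)).continuousOn.integrableOn_compact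
      (isCompact_closedBall 0 1)
  rw [← closedBall_sdiff_ball, setIntegral_sdiff measurableSet_ball hint ball_subset_closedBall,
    hψ.setIntegral_closedBall μ, hψ.setIntegral_ball μ hϖ, measureReal_ball_one]
  push_cast
  rcases le_or_gt ‖x‖ 1 with hx | hx
  · have hϖx : ‖ϖ * x‖ ≤ 1 := (hψ.forall_ball_eq_one_iff hϖ x).1 fun y hy ↦
      (hψ x).2 hx y (ball_subset_closedBall hy)
    rw [if_pos hx, if_pos hϖx, if_pos hx]
    ring
  · have hϖx : ‖ϖ * x‖ ≤ 1 ↔ ‖ϖ * x‖ = 1 :=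
      (one_le_norm_mul_of_one_lt_norm hϖ hx).ge_iff_eq.trans eq_comm
    simp only [if_neg hx.not_ge, hϖx, zero_sub, mul_ite, mul_zero]
    split_ifs <;> ring

end Measure

end NormedField

section Padic

variable (p : ℕ) [Fact p.Prime]

lemma padic_ball_zero_one_eq_closedBall : ball (0 : ℚ_[p]) 1 = closedBall 0 ‖(p : ℚ_[p])‖ := by
  ext y
  simpa using (Padic.norm_le_pow_iff_norm_lt_pow_add_one y (-1)).symm

variable {p} in
lemma hasOrderZero_padic {M : Type*} [Monoid M] {ψ : AddChar ℚ_[p] M}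
    (htriv : ∀ x, ‖x‖ ≤ 1 → ψ x = 1) (hnontriv : ∃ x, ‖x‖ ≤ p ∧ ψ x ≠ 1) : HasOrderZero_s13 ψ := by
  have hp : (0 : ℝ) < p := by exact_mod_cast (Fact.out : p.Prime).pos
  refine hasOrderZero_of_exists_ne_one (padic_ball_zero_one_eq_closedBall p) htriv ?_
  simpa only [norm_mul, Padic.norm_p, inv_mul_le_one₀ hp] using hnontriv

variable {p} in
lemma toZMod_eq_zero_iff_norm_lt_one (z : ℤ_[p]) : PadicInt.toZMod z = 0 ↔ ‖z‖ < 1 := by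
  rw [← RingHom.mem_ker, PadicInt.ker_toZMod, IsLocalRing.mem_maximalIdeal, PadicInt.mem_nonunits]

lemma residueCard_padic : residueCard ℚ_[p] = p := by
  let ι : ℤ_[p] →+ ℚ_[p] := (PadicInt.Coe.ringHom : ℤ_[p] →+* ℚ_[p])
  let red : ℤ_[p] →+ ZMod p := (PadicInt.toZMod : ℤ_[p] →+* ZMod p)
  have hι : Function.Injective ι := Subtype.coe_injective
  have hred : Function.Surjective red := ZMod.ringHom_surjective PadicInt.toZMod
  have hball : openUnitBall ℚ_[p] = red.ker.map ι := by
    ext y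
    constructor
    · intro hy
      have hy' : ‖y‖ < 1 := mem_ball_zero_iff.1 hy
      exact ⟨⟨y, hy'.le⟩, (toZMod_eq_zero_iff_norm_lt_one _).2 hy', rfl⟩
    · rintro ⟨z, hz, rfl⟩
      exact mem_ball_zero_iff.2 ((toZMod_eq_zero_iff_norm_lt_one z).1 hz)
  have hclosedBall : closedUnitBall ℚ_[p] = (⊤ : AddSubgroup ℤ_[p]).map ι := by
    ext y
    constructor
    · exact fun hy ↦ ⟨⟨y, mem_closedBall_zero_iff.1 hy⟩, trivial, rfl⟩
    · rintro ⟨z, -, rfl⟩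
      exact mem_closedBall_zero_iff.2 z.norm_le_one
  rw [residueCard, hball, hclosedBall, AddSubgroup.relIndex_map_map_of_injective _ _ hι,
    AddSubgroup.relIndex_top_right, AddSubgroup.index_ker, AddMonoidHom.range_eq_top.2 hred,
    AddSubgroup.card_top, Nat.card_zmod]

end Padic

/-- Let `p` be a prime, `μ` the Haar measure on `ℚ_p` normalized so that
`μ(ℤ_p) = 1`, and `ψ` a continuous unitary additive character of `ℚ_p` trivial on `ℤ_p` but
nontrivial on `p⁻¹ℤ_p`.  Then for every `x ∈ ℚ_p`, `∫_{ℤ_pˣ} ψ (x y) dμ(y)` equals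
`1 − p⁻¹` if `x ∈ ℤ_p`, `−p⁻¹` if `p x ∈ ℤ_pˣ`, and `0` otherwise. -/
theorem padic_character_integral_over_units
    (p : ℕ) [Fact p.Prime]
    [MeasurableSpace ℚ_[p]] [BorelSpace ℚ_[p]]
    (μ : Measure ℚ_[p]) [μ.IsAddHaarMeasure]
    (hμ : μ {x : ℚ_[p] | ‖x‖ ≤ 1} = 1)
    (ψ : ℚ_[p] → ℂ)
    (hψcont : Continuous ψ)
    (hψadd : ∀ x y : ℚ_[p], ψ (x + y) = ψ x * ψ y)
    (hψnorm : ∀ x : ℚ_[p], ‖ψ x‖ = 1)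
    (hψtriv : ∀ x : ℚ_[p], ‖x‖ ≤ 1 → ψ x = 1)
    (hψnontriv : ∃ x : ℚ_[p], ‖x‖ ≤ p ∧ ψ x ≠ 1)
    (x : ℚ_[p]) :
    (∫ y in {z : ℚ_[p] | ‖z‖ = 1}, ψ (x * y) ∂μ)
      = if ‖x‖ ≤ 1 then 1 - (p : ℂ)⁻¹
        else if ‖(p : ℚ_[p]) * x‖ = 1 then -(p : ℂ)⁻¹ else 0 := by
  let χ : AddChar ℚ_[p] ℂ := ⟨ψ, hψtriv 0 (by simp), hψadd⟩
  have hχ : HasOrderZero_s13 χ := hasOrderZero_padic hψtriv hψnontriv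
  have hsphere : {z : ℚ_[p] | ‖z‖ = 1} = sphere 0 1 := by ext; simp
  have hball : μ.real (closedBall 0 1) = 1 := by simp [measureReal_def, closedBall, hμ]
  have h := padic_character_integral_over_units_general μ hχ (padic_ball_zero_one_eq_closedBall p) x
  rwa [hball, RCLike.ofReal_one, one_mul, residueCard_padic, ← hsphere] at h
end

section
/- Let q > 1 be a real number and let α, β be complex numbers with |α| = |β| = 1 and α ≠ β. Then the series Σ_{i=0}^∞ q^{−i}·(α^{i+1} − β^{i+1})·(α^{−i−1} − β^{−i−1}) converges and Σ_{i=0}^∞ q^{−i}·(α^{i+1} − β^{i+1})·(α^{−i−1} − β^{−i−1}) / ((α − β)·(α^{−1} − β^{−1})) = (1 + q^{−1}) / ((1 − q^{−1})·(1 − α·β^{−1}·q^{−1})·(1 − α^{−1}·β·q^{−1})). -/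
/-! The computation is a case of Cauchy's identity
`∑ᵢ hᵢ(α, β) hᵢ(γ, δ) xⁱ = (1 - αβγδx²) / ((1 - αγx)(1 - αδx)(1 - βγx)(1 - βδx))` for the complete
homogeneous polynomials `hᵢ(α, β) = (αⁱ⁺¹ - βⁱ⁺¹) / (α - β)`. Once multiplied by `(α - β)(γ - δ)`,
its left side is a signed sum of four geometric series. At `γ = α⁻¹`, `δ = β⁻¹` two of the four
factors become `1 - x`, and one of them cancels against the numerator `1 - x²`. -/

theorem cauchy_partial_fractions {K : Type*} [Field K] {α β γ δ x : K}
    (hαγ : 1 - α * γ * x ≠ 0) (hαδ : 1 - α * δ * x ≠ 0)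
    (hβγ : 1 - β * γ * x ≠ 0) (hβδ : 1 - β * δ * x ≠ 0) :
    α * γ / (1 - α * γ * x) - α * δ / (1 - α * δ * x)
        - (β * γ / (1 - β * γ * x) - β * δ / (1 - β * δ * x))
      = (α - β) * (γ - δ) * ((1 - α * β * γ * δ * x ^ 2) /
          ((1 - α * γ * x) * (1 - α * δ * x) * (1 - β * γ * x) * (1 - β * δ * x))) := by
  rw [div_sub_div _ _ hαγ hαδ, div_sub_div _ _ hβγ hβδ,
    div_sub_div _ _ (mul_ne_zero hαγ hαδ) (mul_ne_zero hβγ hβδ), ← mul_div_assoc]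
  congr 1 <;> ring

theorem one_sub_ne_zero_of_norm_lt_one {R : Type*} [SeminormedRing R] [NormOneClass R] {x : R}
    (hx : ‖x‖ < 1) : 1 - x ≠ 0 :=
  sub_ne_zero.mpr fun h ↦ by simp [← h] at hx

section NormedField

variable {K : Type*} [NormedField K] {α β γ δ r x : K}

theorem hasSum_pow_mul_pow_succ (h : ‖r * x‖ < 1) :
    HasSum (fun i : ℕ ↦ x ^ i * r ^ (i + 1)) (r / (1 - r * x)) := by
  rw [div_eq_mul_inv]
  refine ((hasSum_geometric_of_norm_lt_one h).mul_left r).congr_fun fun i ↦ ?_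
  ring

theorem hasSum_cauchy_identity (hαγ : ‖α * γ * x‖ < 1) (hαδ : ‖α * δ * x‖ < 1)
    (hβγ : ‖β * γ * x‖ < 1) (hβδ : ‖β * δ * x‖ < 1) :
    HasSum (fun i : ℕ ↦ x ^ i * (α ^ (i + 1) - β ^ (i + 1)) * (γ ^ (i + 1) - δ ^ (i + 1)))
      ((α - β) * (γ - δ) * ((1 - α * β * γ * δ * x ^ 2) /
        ((1 - α * γ * x) * (1 - α * δ * x) * (1 - β * γ * x) * (1 - β * δ * x)))) := by
  rw [← cauchy_partial_fractions (one_sub_ne_zero_of_norm_lt_one hαγ)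
    (one_sub_ne_zero_of_norm_lt_one hαδ) (one_sub_ne_zero_of_norm_lt_one hβγ)
    (one_sub_ne_zero_of_norm_lt_one hβδ)]
  refine (((hasSum_pow_mul_pow_succ hαγ).sub (hasSum_pow_mul_pow_succ hαδ)).sub
    ((hasSum_pow_mul_pow_succ hβγ).sub (hasSum_pow_mul_pow_succ hβδ))).congr_fun fun i ↦ ?_
  ring

theorem norm_lt_one_of_norm_mul_inv_mul_lt_one (hα : α ≠ 0) (hβ : β ≠ 0)
    (hu : ‖α * β⁻¹ * x‖ < 1) (hv : ‖α⁻¹ * β * x‖ < 1) : ‖x‖ < 1 := by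
  have hprod : α * β⁻¹ * x * (α⁻¹ * β * x) = x ^ 2 := by field_simp
  have hsq : ‖x‖ ^ 2 < 1 := by
    rw [← norm_pow, ← hprod, norm_mul]
    exact mul_lt_one_of_nonneg_of_lt_one_left (norm_nonneg _) hu hv.le
  exact (sq_lt_one_iff₀ (norm_nonneg x)).mp hsq

theorem hasSum_cauchy_identity_inv (hα : α ≠ 0) (hβ : β ≠ 0)
    (hu : ‖α * β⁻¹ * x‖ < 1) (hv : ‖α⁻¹ * β * x‖ < 1) :
    HasSum (fun i : ℕ ↦ x ^ i * (α ^ (i + 1) - β ^ (i + 1)) * (α⁻¹ ^ (i + 1) - β⁻¹ ^ (i + 1)))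
      ((α - β) * (α⁻¹ - β⁻¹) *
        ((1 + x) / ((1 - x) * (1 - α * β⁻¹ * x) * (1 - α⁻¹ * β * x)))) := by
  have hx : ‖x‖ < 1 := norm_lt_one_of_norm_mul_inv_mul_lt_one hα hβ hu hv
  have hx₁ : 1 - x ≠ 0 := one_sub_ne_zero_of_norm_lt_one hx
  have hprod : α * β * α⁻¹ * β⁻¹ = 1 := by field_simp
  have hcancel : (1 - x ^ 2) / ((1 - x) * (1 - α * β⁻¹ * x) * (1 - α⁻¹ * β * x) * (1 - x))
      = (1 + x) / ((1 - x) * (1 - α * β⁻¹ * x) * (1 - α⁻¹ * β * x)) := by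
    rw [← mul_div_mul_right (1 + x) _ hx₁]
    ring
  rw [mul_comm α⁻¹ β] at hv hcancel ⊢
  simpa only [mul_inv_cancel₀ hα, mul_inv_cancel₀ hβ, hprod, one_mul, hcancel] using
    hasSum_cauchy_identity (γ := α⁻¹) (δ := β⁻¹) (by simpa [hα]) hu hv (by simpa [hβ])

theorem whittaker_norm_series_general (hα : α ≠ 0) (hβ : β ≠ 0) (hαβ : α ≠ β)
    (hu : ‖α * β⁻¹ * x‖ < 1) (hv : ‖α⁻¹ * β * x‖ < 1) :
    Summable (fun i : ℕ ↦
        x ^ i * (α ^ (i + 1) - β ^ (i + 1)) * (α⁻¹ ^ (i + 1) - β⁻¹ ^ (i + 1))) ∧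
    (∑' i : ℕ, x ^ i * (α ^ (i + 1) - β ^ (i + 1)) * (α⁻¹ ^ (i + 1) - β⁻¹ ^ (i + 1))) /
        ((α - β) * (α⁻¹ - β⁻¹))
      = (1 + x) / ((1 - x) * (1 - α * β⁻¹ * x) * (1 - α⁻¹ * β * x)) := by
  have hsum := hasSum_cauchy_identity_inv hα hβ hu hv
  have hD : (α - β) * (α⁻¹ - β⁻¹) ≠ 0 :=
    mul_ne_zero (sub_ne_zero.mpr hαβ) (sub_ne_zero.mpr (inv_injective.ne hαβ))
  exact ⟨hsum.summable, by rw [hsum.tsum_eq, mul_div_cancel_left₀ _ hD]⟩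

end NormedField

/-- Let `q > 1` be real and `α β` complex numbers of norm one with `α ≠ β`.
Then `Σ_{i=0}^∞ q^{−i}(α^{i+1} − β^{i+1})(α^{−i−1} − β^{−i−1})` converges, and dividing the sum
by `(α − β)(α⁻¹ − β⁻¹)` gives
`(1 + q⁻¹) / ((1 − q⁻¹)(1 − αβ⁻¹q⁻¹)(1 − α⁻¹βq⁻¹))`. -/
theorem whittaker_norm_series (q : ℝ) (hq : 1 < q) (α β : ℂ)
    (hα : ‖α‖ = 1) (hβ : ‖β‖ = 1) (hαβ : α ≠ β) :
    Summable (fun i : ℕ =>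
        ((q : ℂ))⁻¹ ^ i * (α ^ (i + 1) - β ^ (i + 1)) * (α⁻¹ ^ (i + 1) - β⁻¹ ^ (i + 1))) ∧
    (∑' i : ℕ,
        ((q : ℂ))⁻¹ ^ i * (α ^ (i + 1) - β ^ (i + 1)) * (α⁻¹ ^ (i + 1) - β⁻¹ ^ (i + 1))) /
        ((α - β) * (α⁻¹ - β⁻¹))
      = (1 + (q : ℂ)⁻¹) /
          ((1 - (q : ℂ)⁻¹) * (1 - α * β⁻¹ * (q : ℂ)⁻¹) * (1 - α⁻¹ * β * (q : ℂ)⁻¹)) := by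
  have hx : ‖(q : ℂ)⁻¹‖ < 1 := by
    simpa [abs_of_pos (one_pos.trans hq)] using inv_lt_one_of_one_lt₀ hq
  exact whittaker_norm_series_general (norm_ne_zero_iff.mp (by simp [hα]))
    (norm_ne_zero_iff.mp (by simp [hβ])) hαβ (by simpa [hα, hβ] using hx)
    (by simpa [hα, hβ] using hx)
end

section
/- For every non-negative integer k and every real number v > 0, ∫_{ℝ⁴} (x₂² + v²·x₁²)^k · exp(−(π/v)·(x₂² + v²·x₁² + x₄² + v²·x₃²)) dx₁ dx₂ dx₃ dx₄ = k! · v^k / π^k. -/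
open MeasureTheory

/-!
Grouping the coordinates as `ℝ⁴ = ℝ² × ℝ²` splits the integral into two Gaussian moments of the
quadratic form `x 1 ^ 2 + v ^ 2 * x 0 ^ 2` on the plane, of orders `k` and `0`. Rescaling `x 0`
by `v` turns the form into `‖z‖²` on `ℂ`, at the cost of a factor `v⁻¹`, and polar coordinates
give `∫ ‖z‖^(2k) exp (-b ‖z‖²) = π k! / b^(k+1)`. At `b = π / v` the two moments are
`k! v^k / π^k` and `1`.
-/

lemma integral_fin_add_mul {α 𝕜 : Type*} [MeasureSpace α] [SigmaFinite (volume : Measure α)]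
    [RCLike 𝕜] {m n : ℕ} (f : (Fin m → α) → 𝕜) (g : (Fin n → α) → 𝕜) :
    ∫ x : Fin (m + n) → α, f (fun i ↦ x (Fin.castAdd n i)) * g (fun j ↦ x (Fin.natAdd m j))
      = (∫ y, f y) * ∫ z, g z := by
  let reindex : (Fin m ⊕ Fin n → α) ≃ᵐ (Fin (m + n) → α) :=
    .arrowCongr' finSumFinEquiv (.refl α)
  have hreindex : MeasurePreserving reindex :=
    volume_preserving_arrowCongr' finSumFinEquiv (.refl α) (.id volume)
  have hreindex_apply (x : Fin m ⊕ Fin n → α) (i : Fin (m + n)) :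
      reindex x i = x (finSumFinEquiv.symm i) := rfl
  have hsplit := volume_measurePreserving_sumPiEquivProdPi_symm (fun _ : Fin m ⊕ Fin n ↦ α)
  rw [← integral_prod_mul, ← Measure.volume_eq_prod, ← hreindex.integral_comp',
    ← hsplit.integral_comp']
  simp [hreindex_apply, MeasurableEquiv.coe_sumPiEquivProdPi_symm]

lemma integral_comp_mulVec {ι E : Type*} [Fintype ι] [DecidableEq ι] [NormedAddCommGroup E]
    [NormedSpace ℝ E] {M : Matrix ι ι ℝ} (hM : M.det ≠ 0) (f : (ι → ℝ) → E) :
    ∫ x, f (M.mulVec x) = |M.det|⁻¹ • ∫ y, f y := by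
  have hembed : MeasurableEmbedding (Matrix.toLin' M) :=
    ((Matrix.toLin' M).equivOfDetNeZero
      (by rwa [LinearMap.det_toLin'])).toContinuousLinearEquiv.toHomeomorph.measurableEmbedding
  have hmap := hembed.integral_map (μ := volume) f
  rw [Real.map_matrix_volume_pi_eq_smul_volume_pi hM, integral_smul_measure,
    ENNReal.toReal_ofReal (abs_nonneg _), abs_inv] at hmap
  exact hmap.symm

lemma integral_complex_norm_sq_pow_mul_exp (k : ℕ) {b : ℝ} (hb : 0 < b) :
    ∫ z : ℂ, (‖z‖ ^ 2) ^ k * Real.exp (-b * ‖z‖ ^ 2) = Real.pi * k.factorial / b ^ (k + 1) := by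
  have hmoment := Complex.integral_rpow_mul_exp_neg_mul_rpow (p := 2) (q := (2 * k : ℕ))
    one_le_two (by linarith [(2 * k).cast_nonneg (α := ℝ)]) hb
  have hexponent : (((2 * k : ℕ) : ℝ) + 2) / 2 = (k + 1 : ℕ) := by push_cast; ring
  simp only [neg_div, hexponent, Real.rpow_neg hb.le, Real.rpow_natCast, Real.rpow_two] at hmoment
  rw [Nat.cast_succ, Real.Gamma_nat_eq_factorial] at hmoment
  simp only [← pow_mul, hmoment]
  field_simp

lemma integral_sq_add_sq_pow_mul_exp (k : ℕ) {b : ℝ} (hb : 0 < b) :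
    ∫ x : Fin 2 → ℝ, (x 0 ^ 2 + x 1 ^ 2) ^ k * Real.exp (-b * (x 0 ^ 2 + x 1 ^ 2))
      = Real.pi * k.factorial / b ^ (k + 1) := by
  rw [← integral_complex_norm_sq_pow_mul_exp k hb,
    ← Complex.volume_preserving_equiv_pi.integral_comp']
  simp [Complex.sq_norm, Complex.normSq_apply, ← sq]

lemma integral_sq_add_mul_sq_pow_mul_exp (k : ℕ) {b v : ℝ} (hb : 0 < b) (hv : v ≠ 0) :
    ∫ x : Fin 2 → ℝ, (x 1 ^ 2 + v ^ 2 * x 0 ^ 2) ^ k *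
        Real.exp (-b * (x 1 ^ 2 + v ^ 2 * x 0 ^ 2))
      = Real.pi * k.factorial / (|v| * b ^ (k + 1)) := by
  have hdet : (!![v, 0; 0, 1] : Matrix (Fin 2) (Fin 2) ℝ).det = v := by simp
  have hscale := integral_comp_mulVec (hdet.trans_ne hv) fun x : Fin 2 → ℝ ↦
    (x 0 ^ 2 + x 1 ^ 2) ^ k * Real.exp (-b * (x 0 ^ 2 + x 1 ^ 2))
  rw [integral_sq_add_sq_pow_mul_exp k hb, hdet] at hscale
  convert hscale using 1
  · simp [mul_pow, add_comm (_ * _), Matrix.vecHead, Matrix.vecTail]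
  · rw [smul_eq_mul]; field_simp

/-- For every non-negative integer `k` and every real `v > 0`,
`∫_{ℝ⁴} (x₂² + v²x₁²)^k · exp(−(π/v)(x₂² + v²x₁² + x₄² + v²x₃²)) dx = k! v^k / π^k`. -/
theorem integral_schwartz_normalization (k : ℕ) (v : ℝ) (hv : 0 < v) :
    ∫ x : Fin 4 → ℝ,
        ((x 1 ^ 2 + v ^ 2 * x 0 ^ 2) ^ k *
          Real.exp (-(Real.pi / v) * (x 1 ^ 2 + v ^ 2 * x 0 ^ 2 + x 3 ^ 2 + v ^ 2 * x 2 ^ 2)))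
      = (Nat.factorial k) * v ^ k / Real.pi ^ k := by
  let φ (m : ℕ) (y : Fin 2 → ℝ) : ℝ := (y 1 ^ 2 + v ^ 2 * y 0 ^ 2) ^ m *
    Real.exp (-(Real.pi / v) * (y 1 ^ 2 + v ^ 2 * y 0 ^ 2))
  have hφ (m : ℕ) : ∫ y, φ m y = m.factorial * v ^ m / Real.pi ^ m := by
    rw [integral_sq_add_mul_sq_pow_mul_exp m (div_pos Real.pi_pos hv) hv.ne', abs_of_pos hv,
      div_pow]
    field_simp
    ring
  calc
    _ = ∫ x : Fin (2 + 2) → ℝ, φ k (fun i ↦ x (Fin.castAdd 2 i)) *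
          φ 0 (fun j ↦ x (Fin.natAdd 2 j)) := by
      congr! 2 with x
      simp only [φ, pow_zero, one_mul, mul_assoc, ← Real.exp_add, ← mul_add, ← add_assoc]
      rfl
    _ = (∫ y, φ k y) * ∫ z, φ 0 z := integral_fin_add_mul _ _
    _ = k.factorial * v ^ k / Real.pi ^ k := by simp [hφ]
end

section
/- Let p be a prime and n ≥ 1 an integer. The subgroup {g ∈ SL₂(ℤ_p) : the (2,1) entry of g lies in pⁿ·ℤ_p} of SL₂(ℤ_p) has index p^{n−1}·(p+1). -/
/-!
A left coset of `Γ₀(I)` in `SL₂(R)`, for a proper ideal `I` of a local ring `R` with maximal ideal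
`𝔪`, is determined by the point `(a : c)` of `ℙ¹(R/I)` given by the first column of any of its
elements. Since `a` and `c` cannot both lie in `𝔪`, that point is either `(1 : x)` with `x ∈ R/I`,
when `a` is a unit, or `(y : 1)` with `y ∈ 𝔪/I`, when `a ∈ 𝔪`. Hence the index is
`|R/I| + |𝔪/I|`, and `|R/I| = q |𝔪/I|` where `q` is the order of the residue field. If `R` is a
discrete valuation ring and `I = 𝔪ⁿ`, then `|R/I| = qⁿ`.
-/

/-- The congruence subgroup of `SL₂(ℤ_p)` of level `pⁿ`, consisting of the matrices whose
lower-left entry is divisible by `pⁿ`. -/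
def padicCongruenceSubgroup (p : ℕ) [Fact p.Prime] (n : ℕ) :
    Subgroup (Matrix.SpecialLinearGroup (Fin 2) ℤ_[p]) where
  carrier := {g | (p : ℤ_[p]) ^ n ∣ (g : Matrix (Fin 2) (Fin 2) ℤ_[p]) 1 0}
  one_mem' := by
    simp only [Set.mem_setOf_eq, Matrix.SpecialLinearGroup.coe_one,
      Matrix.one_apply_ne (show (1 : Fin 2) ≠ 0 by decide)]
    exact dvd_zero _
  mul_mem' := by
    intro a b ha hb
    simp only [Set.mem_setOf_eq] at ha hb ⊢
    have h : ((a * b : Matrix.SpecialLinearGroup (Fin 2) ℤ_[p]) :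
        Matrix (Fin 2) (Fin 2) ℤ_[p]) 1 0
        = (a : Matrix (Fin 2) (Fin 2) ℤ_[p]) 1 0 * (b : Matrix (Fin 2) (Fin 2) ℤ_[p]) 0 0
          + (a : Matrix (Fin 2) (Fin 2) ℤ_[p]) 1 1 * (b : Matrix (Fin 2) (Fin 2) ℤ_[p]) 1 0 := by
      rw [Matrix.SpecialLinearGroup.coe_mul, Matrix.mul_apply, Fin.sum_univ_two]
    rw [h]
    exact dvd_add (ha.mul_right _) (hb.mul_left _)
  inv_mem' := by
    intro a ha
    simp only [Set.mem_setOf_eq] at ha ⊢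
    have h : ((a⁻¹ : Matrix.SpecialLinearGroup (Fin 2) ℤ_[p]) :
        Matrix (Fin 2) (Fin 2) ℤ_[p]) 1 0
        = -((a : Matrix (Fin 2) (Fin 2) ℤ_[p]) 1 0) := by
      rw [Matrix.SpecialLinearGroup.coe_inv, Matrix.adjugate_fin_two]
      simp
    rw [h]
    exact dvd_neg.mpr ha

open IsLocalRing
open scoped MatrixGroups

section CommRing

variable {R : Type*} [CommRing R]

lemma specialLinearGroup_inv_mul_apply_one_zero (g h : SL(2, R)) :
    (g⁻¹ * h) 1 0 = g 0 0 * h 1 0 - g 1 0 * h 0 0 := by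
  simp only [Matrix.SpecialLinearGroup.coe_mul, Matrix.SpecialLinearGroup.coe_inv,
    Matrix.adjugate_fin_two, Matrix.mul_apply, Fin.sum_univ_two, Matrix.of_apply, Matrix.cons_val]
  ring

/-- The subgroup `Γ₀(I)` of `SL₂(R)`, consisting of the matrices whose lower-left entry lies in the
ideal `I`. It extends `padicCongruenceSubgroup` to arbitrary commutative rings. -/
def idealCongruenceSubgroup (I : Ideal R) : Subgroup SL(2, R) where
  carrier := {g | g 1 0 ∈ I}
  one_mem' := by simp
  mul_mem' {g h} hg hh := by
    simpa [Matrix.mul_apply] using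
      I.add_mem (I.mul_mem_right (h 0 0) hg) (I.mul_mem_left (g 1 1) hh)
  inv_mem' {g} hg := by
    simpa [Matrix.adjugate_fin_two] using hg

lemma mem_idealCongruenceSubgroup {I : Ideal R} {g : SL(2, R)} :
    g ∈ idealCongruenceSubgroup I ↔ g 1 0 ∈ I :=
  Iff.rfl

lemma idealCongruenceSubgroup_mk_eq_mk_iff {I : Ideal R} {g h : SL(2, R)} :
    (g : SL(2, R) ⧸ idealCongruenceSubgroup I) = h ↔ g 0 0 * h 1 0 - g 1 0 * h 0 0 ∈ I := by
  rw [QuotientGroup.eq, mem_idealCongruenceSubgroup, specialLinearGroup_inv_mul_apply_one_zero]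

lemma natCard_quotient_mul_natCard_map_mk {I J : Ideal R} (hIJ : I ≤ J) :
    Nat.card (R ⧸ J) * Nat.card (J.map (Ideal.Quotient.mk I)) = Nat.card (R ⧸ I) := by
  rw [← Nat.card_congr (DoubleQuot.quotQuotEquivQuotOfLE hIJ).toEquiv]
  exact (AddSubgroup.card_eq_card_quotient_mul_card_addSubgroup
    (J.map (Ideal.Quotient.mk I)).toAddSubgroup).symm

end CommRing

section IsLocalRing

variable {R : Type*} [CommRing R] [IsLocalRing R] {I : Ideal R}

/-- Representatives in `SL₂(R)` of the points `(1 : x)`, for `x ∈ R/I`, and `(y : 1)`, for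
`y ∈ 𝔪/I`, of `ℙ¹(R/I)`; the point of a matrix is its first column. The classes `x` and `y` are
lifted to `R` by choice. -/
noncomputable def cosetRep (I : Ideal R) :
    (R ⧸ I) ⊕ (maximalIdeal R).map (Ideal.Quotient.mk I) → SL(2, R)
  | .inl x => ⟨!![1, 0; x.out, 1], by simp⟩
  | .inr y => ⟨!![y.1.out, -1; 1, 0], by simp⟩

lemma mk_cosetRep_inl_eq_mk_iff {x : R ⧸ I} {g : SL(2, R)} :
    (cosetRep I (.inl x) : SL(2, R) ⧸ idealCongruenceSubgroup I) = g ↔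
      Ideal.Quotient.mk I (g 1 0) = x * Ideal.Quotient.mk I (g 0 0) := by
  rw [idealCongruenceSubgroup_mk_eq_mk_iff, ← Ideal.Quotient.mk_eq_mk_iff_sub_mem, map_mul, map_mul]
  simp [cosetRep]

lemma mk_cosetRep_inr_eq_mk_iff {y : (maximalIdeal R).map (Ideal.Quotient.mk I)} {g : SL(2, R)} :
    (cosetRep I (.inr y) : SL(2, R) ⧸ idealCongruenceSubgroup I) = g ↔
      y * Ideal.Quotient.mk I (g 1 0) = Ideal.Quotient.mk I (g 0 0) := by
  rw [idealCongruenceSubgroup_mk_eq_mk_iff, ← Ideal.Quotient.mk_eq_mk_iff_sub_mem, map_mul, map_mul]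
  simp [cosetRep]

lemma mk_cosetRep_inl_ne_mk_cosetRep_inr (hI : I ≠ ⊤) (x : R ⧸ I)
    (y : (maximalIdeal R).map (Ideal.Quotient.mk I)) :
    (cosetRep I (.inl x) : SL(2, R) ⧸ idealCongruenceSubgroup I) ≠ cosetRep I (.inr y) := by
  intro h
  have hxy : 1 = x * y := by simpa [cosetRep] using mk_cosetRep_inl_eq_mk_iff.1 h
  have hone : Ideal.Quotient.mk I 1 ∈ (maximalIdeal R).map (Ideal.Quotient.mk I) := by
    rw [map_one, hxy]
    exact Ideal.mul_mem_left _ x y.2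
  rw [Ideal.mem_quotient_iff_mem (le_maximalIdeal hI)] at hone
  exact (mem_maximalIdeal _).1 hone isUnit_one

lemma mk_cosetRep_injective (hI : I ≠ ⊤) :
    Function.Injective fun i ↦ (cosetRep I i : SL(2, R) ⧸ idealCongruenceSubgroup I) := by
  rintro (x | y) (x' | y') h
  · have hx : x' = x := by simpa [cosetRep] using mk_cosetRep_inl_eq_mk_iff.1 h
    rw [hx]
  · exact absurd h (mk_cosetRep_inl_ne_mk_cosetRep_inr hI x y')
  · exact absurd h.symm (mk_cosetRep_inl_ne_mk_cosetRep_inr hI x' y)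
  · have hy : y = y' := by simpa [cosetRep] using mk_cosetRep_inr_eq_mk_iff.1 h
    rw [hy]

lemma isUnit_apply_one_zero_of_apply_zero_zero_mem {g : SL(2, R)}
    (ha : g 0 0 ∈ maximalIdeal R) : IsUnit (g 1 0) := by
  by_contra hc
  have hdet : g 0 0 * g 1 1 - g 0 1 * g 1 0 = 1 := by rw [← Matrix.det_fin_two, g.det_coe]
  have hone : (1 : R) ∈ maximalIdeal R :=
    hdet ▸ sub_mem (Ideal.mul_mem_right _ _ ha) (Ideal.mul_mem_left _ _ ((mem_maximalIdeal _).2 hc))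
  exact (mem_maximalIdeal _).1 hone isUnit_one

lemma mk_cosetRep_surjective (I : Ideal R) :
    Function.Surjective fun i ↦ (cosetRep I i : SL(2, R) ⧸ idealCongruenceSubgroup I) := by
  intro q
  obtain ⟨g, rfl⟩ := QuotientGroup.mk_surjective q
  by_cases ha : g 0 0 ∈ maximalIdeal R
  · obtain ⟨d, hd⟩ := (isUnit_apply_one_zero_of_apply_zero_zero_mem ha).exists_left_inv
    refine ⟨.inr ⟨Ideal.Quotient.mk I (g 0 0 * d), Ideal.mem_map_of_mem _ ?_⟩,
      mk_cosetRep_inr_eq_mk_iff.2 ?_⟩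
    · exact Ideal.mul_mem_right d _ ha
    · rw [← map_mul, mul_assoc, hd, mul_one]
  · obtain ⟨b, hb⟩ := (notMem_maximalIdeal.1 ha).exists_left_inv
    refine ⟨.inl (Ideal.Quotient.mk I (g 1 0 * b)), mk_cosetRep_inl_eq_mk_iff.2 ?_⟩
    rw [← map_mul, mul_assoc, hb, mul_one]

lemma index_idealCongruenceSubgroup (hI : I ≠ ⊤) [Finite (R ⧸ I)] :
    (idealCongruenceSubgroup I).index =
      Nat.card (R ⧸ I) + Nat.card ((maximalIdeal R).map (Ideal.Quotient.mk I)) := by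
  rw [Subgroup.index_eq_card, ← Nat.card_sum]
  exact (Nat.card_eq_of_bijective _ ⟨mk_cosetRep_injective hI, mk_cosetRep_surjective I⟩).symm

end IsLocalRing

section IsDiscreteValuationRing

variable (R : Type*) [CommRing R] [IsDomain R] [IsDiscreteValuationRing R]

lemma natCard_quotient_maximalIdeal_pow (n : ℕ) :
    Nat.card (R ⧸ maximalIdeal R ^ n) = Nat.card (ResidueField R) ^ n :=
  cardQuot_pow_of_prime (IsDiscreteValuationRing.not_a_field R)

lemma natCard_map_mk_maximalIdeal_pow_succ [Finite (ResidueField R)] (n : ℕ) :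
    Nat.card ((maximalIdeal R).map (Ideal.Quotient.mk (maximalIdeal R ^ (n + 1)))) =
      Nat.card (ResidueField R) ^ n := by
  have hcard := natCard_quotient_mul_natCard_map_mk
    (Ideal.pow_le_self n.succ_ne_zero : maximalIdeal R ^ (n + 1) ≤ maximalIdeal R)
  rw [natCard_quotient_maximalIdeal_pow, pow_succ' (Nat.card _)] at hcard
  exact Nat.eq_of_mul_eq_mul_left (Nat.card_pos (α := ResidueField R)) hcard

theorem padicCongruenceSubgroup_index_general [Finite (ResidueField R)] {n : ℕ} (hn : 1 ≤ n) :
    (idealCongruenceSubgroup (maximalIdeal R ^ n)).index =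
      Nat.card (ResidueField R) ^ (n - 1) * (Nat.card (ResidueField R) + 1) := by
  obtain ⟨m, rfl⟩ := Nat.exists_eq_add_of_le' hn
  have hne_top : maximalIdeal R ^ (m + 1) ≠ ⊤ :=
    ne_top_of_le_ne_top Ideal.IsPrime.ne_top' (Ideal.pow_le_self m.succ_ne_zero)
  have : Finite (R ⧸ maximalIdeal R ^ (m + 1)) := Nat.finite_of_card_ne_zero <| by
    rw [natCard_quotient_maximalIdeal_pow]
    exact pow_ne_zero _ Nat.card_pos.ne'
  rw [index_idealCongruenceSubgroup hne_top, natCard_quotient_maximalIdeal_pow,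
    natCard_map_mk_maximalIdeal_pow_succ, Nat.add_sub_cancel, pow_succ, mul_add_one]

end IsDiscreteValuationRing

lemma padicCongruenceSubgroup_eq_idealCongruenceSubgroup (p : ℕ) [Fact p.Prime] (n : ℕ) :
    padicCongruenceSubgroup p n = idealCongruenceSubgroup (maximalIdeal ℤ_[p] ^ n) := by
  ext g
  rw [mem_idealCongruenceSubgroup, PadicInt.maximalIdeal_eq_span_p, Ideal.span_singleton_pow,
    Ideal.mem_span_singleton]
  rfl

lemma natCard_residueField_padicInt (p : ℕ) [Fact p.Prime] :
    Nat.card (ResidueField ℤ_[p]) = p := by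
  rw [Nat.card_congr PadicInt.residueField.toEquiv, Nat.card_zmod]

/-- For a prime `p` and `n ≥ 1`, the subgroup
`{g ∈ SL₂(ℤ_p) : g 1 0 ∈ pⁿℤ_p}` of `SL₂(ℤ_p)` has index `p^(n−1)(p+1)`. -/
theorem padicCongruenceSubgroup_index (p : ℕ) [Fact p.Prime] (n : ℕ) (hn : 1 ≤ n) :
    (padicCongruenceSubgroup p n).index = p ^ (n - 1) * (p + 1) := by
  rw [padicCongruenceSubgroup_eq_idealCongruenceSubgroup,
    padicCongruenceSubgroup_index_general ℤ_[p] hn, natCard_residueField_padicInt]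
end
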